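/- arXiv:2504.11768 — 2 statements merged into one kernel-verified Lean document; each statement's English description precedes it below -/
import Mathlib

section
/- Let (T, R, A) be weakly G-quasiapproximable or weakly G-approximable. Then there exists an integer B > 0 such that for every integer i and every K ∈ T^c ∩ R_i there is a distinguished triangle E → K → D → ΣE with E ∈ G^{[-B-i, B-i]} and D ∈ R_{i+1}. If (T, R, A) is moreover G-quasiapproximable or G-approximable, B can be chosen so that one may take E ∈ G^{[-B-i, B-i]}_B. -/
namespace GApprox

open CategoryTheory CategoryTheory.Limits CategoryTheory.Pretriangulated

universe w v u

variable (C : Type u) [Category.{v} C] [HasZeroObject C] [HasShift C ℤ]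
  [Preadditive C] [∀ n : ℤ, (shiftFunctor C n).Additive] [Pretriangulated C]
  [HasCoproducts.{v} C]

/-- The right orthogonal of a class of objects. -/
def rOrth (A : Set C) : Set C := {X | ∀ a ∈ A, ∀ f : a ⟶ X, f = 0}

/-- The left orthogonal of a class of objects. -/
def lOrth (A : Set C) : Set C := {X | ∀ a ∈ A, ∀ f : X ⟶ a, f = 0}

/-- `Hom(A, B) = 0`. -/
def homZero (A B : Set C) : Prop := ∀ a ∈ A, ∀ b ∈ B, ∀ f : a ⟶ b, f = 0

/-- The star operation `A ⋆ B`: objects `Y` admitting a distinguished triangle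
`X ⟶ Y ⟶ Z ⟶ ΣX` with `X ∈ A` and `Z ∈ B`. -/
def starSet (A B : Set C) : Set C :=
  {Y | ∃ (X Z : C) (f : X ⟶ Y) (g : Y ⟶ Z) (h : Z ⟶ X⟦(1 : ℤ)⟧),
    Triangle.mk f g h ∈ (distTriang C) ∧ X ∈ A ∧ Z ∈ B}

/-- The (strictly full) shift `Σⁿ A` of a class of objects. -/
def shiftSet (n : ℤ) (A : Set C) : Set C :=
  {X | ∃ a ∈ A, Nonempty (X ≅ (shiftFunctor C n).obj a)}

/-- An object is compact if any map to a coproduct factors through a finite subcoproduct. -/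
def IsCompactObj (X : C) : Prop :=
  ∀ (α : Type v) (f : α → C) (g : X ⟶ ∐ f),
    ∃ (s : Finset α) (h : X ⟶ ∐ (fun i : {a : α // a ∈ s} => f i.1)),
      g = h ≫ Sigma.desc (fun i => Sigma.ι f i.1)

/-- The class of compact objects `T^c`. -/
def compacts : Set C := {X | IsCompactObj C X}

/-- The category is compactly generated. -/
def CompactlyGenerated : Prop :=
  ∀ X : C, (∀ K ∈ compacts C, ∀ f : K ⟶ X, f = 0) → IsZero X

/-- Closure under direct summands (retracts), `smd`. -/
def smd (A : Set C) : Set C :=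
  {X | ∃ Y ∈ A, ∃ (i : X ⟶ Y) (r : Y ⟶ X), i ≫ r = 𝟙 X}

/-- Closure of a class of objects under finite direct sums and extensions (`coprod`). -/
inductive extClosure (U : Set C) : C → Prop
  | of {X : C} : X ∈ U → extClosure U X
  | zero {X : C} : IsZero X → extClosure U X
  | ext {X Y Z : C} (f : X ⟶ Y) (g : Y ⟶ Z) (h : Z ⟶ X⟦(1 : ℤ)⟧) :
      Triangle.mk f g h ∈ (distTriang C) → extClosure U X → extClosure U Z → extClosure U Y

/-- Closure of a class of objects under arbitrary coproducts, extensions and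
direct summands. -/
inductive bigClosure (U : Set C) : C → Prop
  | of {X : C} : X ∈ U → bigClosure U X
  | zero {X : C} : IsZero X → bigClosure U X
  | coprod {α : Type v} (f : α → C) :
      (∀ i, bigClosure U (f i)) → ∀ {X : C}, (X ≅ ∐ f) → bigClosure U X
  | ext {X Y Z : C} (f : X ⟶ Y) (g : Y ⟶ Z) (h : Z ⟶ X⟦(1 : ℤ)⟧) :
      Triangle.mk f g h ∈ (distTriang C) → bigClosure U X → bigClosure U Z → bigClosure U Y
  | retract {X Y : C} (i : X ⟶ Y) (r : Y ⟶ X) :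
      i ≫ r = 𝟙 X → bigClosure U Y → bigClosure U X

/-- Closure of a class of objects under finite direct sums, `add`. -/
def addClosure (U : Set C) : Set C :=
  {X | ∃ (n : ℕ) (f : ULift.{v} (Fin n) → C), (∀ i, f i ∈ U) ∧ Nonempty (X ≅ ∐ f)}

/-- Closure of a class of objects under arbitrary coproducts, `Add`. -/
def bigAddClosure (U : Set C) : Set C :=
  {X | ∃ (α : Type v) (f : α → C), (∀ i, f i ∈ U) ∧ Nonempty (X ≅ ∐ f)}

/-- `coprod_n(U)`. -/
def coprodPow (U : Set C) : ℕ → Set C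
  | 0 => {X | IsZero X}
  | n + 1 => starSet C (addClosure C U) (coprodPow U n)

/-- `Coprod_n(U)`. -/
def coprodPowBig (U : Set C) : ℕ → Set C
  | 0 => {X | IsZero X}
  | n + 1 => starSet C (bigAddClosure C U) (coprodPowBig U n)

/-- `G[a,b] = ∪ { G^m : a ≤ m ≤ b }`. -/
def unionIcc (G : ℤ → Set C) (a b : ℤ) : Set C := ⋃ m ∈ Set.Icc a b, G m

/-- `G(-∞,b] = ∪ { G^m : m ≤ b }`. -/
def unionIic (G : ℤ → Set C) (b : ℤ) : Set C := ⋃ m ∈ Set.Iic b, G m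

/-- `G(-∞,∞) = ∪ { G^m : m ∈ ℤ }`. -/
def unionAll (G : ℤ → Set C) : Set C := ⋃ m : ℤ, G m

/-- `G^{[a,b]} = smd(coprod(G[a,b]))`. -/
def gInt (G : ℤ → Set C) (a b : ℤ) : Set C :=
  smd C {X | extClosure C (unionIcc C G a b) X}

/-- `G^{(-∞,b]} = smd(coprod(G(-∞,b]))`. -/
def gIic (G : ℤ → Set C) (b : ℤ) : Set C :=
  smd C {X | extClosure C (unionIic C G b) X}

/-- `G^{[a,b]}_k = smd(coprod_k(G[a,b]))`. -/
def gIntPow (G : ℤ → Set C) (a b k : ℤ) : Set C :=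
  smd C (coprodPow C (unionIcc C G a b) k.toNat)

/-- `Ḡ^{[a,b]}`. -/
def gBarInt (G : ℤ → Set C) (a b : ℤ) : Set C :=
  {X | bigClosure C (unionIcc C G a b) X}

/-- `Ḡ^{(-∞,b]}`. -/
def gBarIic (G : ℤ → Set C) (b : ℤ) : Set C :=
  {X | bigClosure C (unionIic C G b) X}

/-- `Ḡ^{[a,b]}_k = smd(Coprod_k(G[a,b]))`. -/
def gBarIntPow (G : ℤ → Set C) (a b k : ℤ) : Set C :=
  smd C (coprodPowBig C (unionIcc C G a b) k.toNat)

/-- `M^G_n := G^{(-∞,-n]}`. -/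
def MG (G : ℤ → Set C) (n : ℤ) : Set C := gIic C G (-n)

/-- `R^G_n := ⊥((M^G_n)^⊥)`, orthogonals taken in the whole category. -/
def RG (G : ℤ → Set C) (n : ℤ) : Set C := lOrth C (rOrth C (MG C G n))

/-- A pre-generating sequence. -/
structure IsPreGenSeq (G : ℤ → Set C) : Prop where
  compact : ∀ i : ℤ, G i ⊆ compacts C
  generates : smd C {X | extClosure C (unionAll C G) X} = compacts C

/-- A generating sequence. -/
structure IsGenSeq (G : ℤ → Set C) extends IsPreGenSeq C G : Prop where
  shift_cond : ∀ n : ℤ,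
    shiftSet C (-1) (G n) ∪ G n ∪ shiftSet C 1 (G n) ⊆ gInt C G (n - 1) (n + 1)

/-- A finite generating sequence. -/
structure IsFinGenSeq (G : ℤ → Set C) extends IsGenSeq C G : Prop where
  finite : ∀ i : ℤ, (G i).Finite

/-- ℕ-equivalence of generating sequences. -/
def GenSeqNEquiv (G G' : ℤ → Set C) : Prop :=
  ∃ N : ℤ, 0 ≤ N ∧ (∀ n : ℤ, G' n ⊆ gInt C G (n - N) (n + N)) ∧
    ∀ n : ℤ, G n ⊆ gInt C G' (n - N) (n + N)

/-- ℕ-equivalence of (extended good) metrics. -/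
def MetricNEquiv (M N : ℤ → Set C) : Prop :=
  ∃ n : ℤ, 0 ≤ n ∧ (∀ i : ℤ, M (i + n) ⊆ N i) ∧ ∀ i : ℤ, N (i + n) ⊆ M i

/-- An extended good metric. -/
structure IsExtGoodMetric (M : ℤ → Set C) : Prop where
  zero_mem : ∀ (n : ℤ) (X : C), IsZero X → X ∈ M n
  iso_closed : ∀ (n : ℤ) ⦃X Y : C⦄, (X ≅ Y) → X ∈ M n → Y ∈ M n
  star_subset : ∀ n : ℤ, starSet C (M n) (M n) ⊆ M n
  shift_one : ∀ n : ℤ, shiftSet C 1 (M (n + 1)) ⊆ M n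
  antitone : ∀ n : ℤ, M (n + 1) ⊆ M n
  shift_neg_one : ∀ n : ℤ, shiftSet C (-1) (M (n + 1)) ⊆ M n

/-- An orthogonal metric. -/
structure IsOrthMetric (M : ℤ → Set C) extends IsExtGoodMetric C M : Prop where
  orth : ∀ n : ℤ, lOrth C (rOrth C (M n)) = M n

/-- The closure of the compacts `T̄^c := ∩ₙ T^c ⋆ Rₙ`. -/
def closCompacts (Rm : ℤ → Set C) : Set C := ⋂ n : ℤ, starSet C (compacts C) (Rm n)

/-- `(T, R, A)` is `G`-preapproximable. -/
structure IsGPreApprox (G Rm : ℤ → Set C) (A : ℤ) : Prop where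
  orthMetric : IsOrthMetric C Rm
  A_pos : 0 < A
  cond0 : ∀ i : ℤ, MG C G i ⊆ ⋃ n ∈ {n : ℤ | |n| ≤ A}, shiftSet C n (MG C G (i + 1))
  cond1 : ∀ i : ℤ, MG C G (i + A) ⊆ Rm i ∩ compacts C
  cond2 : ∀ n : ℤ, ∃ N : ℤ, ∀ i : ℤ, N ≤ i → homZero C (G n) (Rm i)

/-- There is a distinguished triangle `E ⟶ F ⟶ D ⟶ ΣE` with `E ∈ S` and `D ∈ D`. -/
def approxTriangle (F : C) (S D : Set C) : Prop :=
  ∃ (E Dd : C) (f : E ⟶ F) (g : F ⟶ Dd) (h : Dd ⟶ E⟦(1 : ℤ)⟧),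
    Triangle.mk f g h ∈ (distTriang C) ∧ E ∈ S ∧ Dd ∈ D

/-- `(T, R, A)` is weakly `G`-approximable. -/
structure IsWeakGApprox (G Rm : ℤ → Set C) (A : ℤ) extends IsGPreApprox C G Rm A : Prop where
  hom_vanish : ∀ n i : ℤ, A ≤ n + i → homZero C (G n) (Rm i)
  approx : ∀ i : ℤ, ∀ F ∈ Rm i,
    approxTriangle C F (gBarInt C G (-A - i) (A - i)) (Rm (i + 1))

/-- `(T, R, A)` is `G`-approximable. -/
structure IsGApprox (G Rm : ℤ → Set C) (A : ℤ) extends IsWeakGApprox C G Rm A : Prop where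
  approx' : ∀ i : ℤ, ∀ F ∈ Rm i,
    approxTriangle C F (gBarIntPow C G (-A - i) (A - i) A) (Rm (i + 1))

/-- `(T, R, A)` is weakly `G`-quasiapproximable. -/
structure IsWeakGQuasiApprox (G Rm : ℤ → Set C) (A : ℤ) extends IsGPreApprox C G Rm A : Prop where
  hom_vanish : ∀ n i : ℤ, A ≤ n + i → homZero C (G n) (Rm i)
  approx : ∀ i : ℤ, ∀ F ∈ Rm i ∩ closCompacts C Rm,
    approxTriangle C F (gBarInt C G (-A - i) (A - i)) (Rm (i + 1) ∩ closCompacts C Rm)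

/-- `(T, R, A)` is `G`-quasiapproximable. -/
structure IsGQuasiApprox (G Rm : ℤ → Set C) (A : ℤ) extends IsWeakGQuasiApprox C G Rm A : Prop where
  approx' : ∀ i : ℤ, ∀ F ∈ Rm i ∩ closCompacts C Rm,
    approxTriangle C F (gBarIntPow C G (-A - i) (A - i) A) (Rm (i + 1) ∩ closCompacts C Rm)

/-- The coproduct of a sequence of objects. -/
noncomputable def seqCoprod (E : ℕ → C) : C := ∐ (fun n : ULift.{v} ℕ => E n.down)

/-- The canonical inclusion into the coproduct of a sequence. -/
noncomputable def seqInj (E : ℕ → C) (n : ℕ) : E n ⟶ seqCoprod C E :=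
  Sigma.ι (fun n : ULift.{v} ℕ => E n.down) (ULift.up n)

/-- The map `1 - shift` on the coproduct of a sequence. -/
noncomputable def oneMinusShift (E : ℕ → C) (e : ∀ n, E n ⟶ E (n + 1)) :
    seqCoprod C E ⟶ seqCoprod C E :=
  Sigma.desc (fun n => seqInj C E n.down - e n.down ≫ seqInj C E (n.down + 1))

/-- `H`, equipped with `π`, `δ`, is a homotopy colimit of the sequence `E`. -/
def IsHocolim (E : ℕ → C) (e : ∀ n, E n ⟶ E (n + 1)) (H : C)
    (π : seqCoprod C E ⟶ H) (δ : H ⟶ (seqCoprod C E)⟦(1 : ℤ)⟧) : Prop :=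
  Triangle.mk (oneMinusShift C E e) π δ ∈ (distTriang C)

/-- A single compact generator. -/
def IsCompactGenerator (G₀ : C) : Prop :=
  IsCompactObj C G₀ ∧ ∀ X : C, (∀ n : ℤ, ∀ f : (shiftFunctor C n).obj G₀ ⟶ X, f = 0) → IsZero X

/-- The strictly full subcategory `{Σʲ G₀}`. -/
def singletonShift (G₀ : C) (j : ℤ) : Set C :=
  {X | Nonempty (X ≅ (shiftFunctor C j).obj G₀)}

/-- The generating sequence `Gⁿ := {Σ⁻ⁿ G₀}`. -/
def genSeqNeg (G₀ : C) (n : ℤ) : Set C := singletonShift C G₀ (-n)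

/-- The generating sequence `Gⁿ := {Σⁿ G₀}`. -/
def genSeqPos (G₀ : C) (n : ℤ) : Set C := singletonShift C G₀ n

/-!
No octahedral axiom is available. The orthogonality `⊥(R_n^⊥) = R_n` replaces it: whether the cone
of `f` lies in `R_n` can be read off from the maps `Hom(f, W)` with `W ∈ R_n^⊥`, so diagram chases
give `P ⋆ (Q ⋆ R_n) ⊆ (P ⋆ Q) ⋆ R_n`.

Iterating the approximation condition `m` times from a compact `K ∈ R_i` leaves an error in
`R_{i+m}`, to which `K` has no nonzero morphism once `m` is large. Since morphisms from compact
objects to the approximating objects factor through compact ones, `K` is a direct summand of some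
`V ≅ K ⊞ X` in `G^{(-∞,A-i]}` that is approximated modulo every `R_n` with uniform constants. A
swindle removes `X`: the triangle `Y ⊞ Z ⟶ X ⊞ Y ⟶ X ⊞ ΣZ` turns approximations of `K ⊞ X` into
approximations of `K ⊞ ΣK` and then, with constants depending on `s`, of `K ⊞ ΣˢK` for every odd
`s`. Condition (0) of preapproximability provides an odd `s`, bounded independently of `K`, with
`ΣˢK ∈ R_{i+2}`; then `K ⊞ ΣˢK ⟶ K` has cone in `R_{i+1}`, so `K` inherits the approximation.

For the bound on the number of extensions, the iteration is run on the objects of `G^{[-N-i,N-i]}`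
found in this way, where the number of steps depends only on `A` and `N`.
-/

local infixr:70 " ⋆ " => starSet _

section Retracts

variable {C}
omit [HasZeroObject C] [HasShift C ℤ] [Preadditive C] [∀ n : ℤ, (shiftFunctor C n).Additive]
  [Pretriangulated C] [HasCoproducts.{v} C]

theorem subset_smd (P : Set C) : P ⊆ smd C P := fun X hX => ⟨X, hX, 𝟙 X, 𝟙 X, Category.comp_id _⟩

theorem smd_mono {P Q : Set C} (h : P ⊆ Q) : smd C P ⊆ smd C Q :=
  fun _ ⟨Y, hY, i, r, w⟩ => ⟨Y, h hY, i, r, w⟩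

theorem mem_smd_of_retract {P : Set C} {X Y : C} (hY : Y ∈ smd C P) (i : X ⟶ Y) (r : Y ⟶ X)
    (w : i ≫ r = 𝟙 X) : X ∈ smd C P := by
  obtain ⟨Z, hZ, i', r', w'⟩ := hY
  exact ⟨Z, hZ, i ≫ i', r' ≫ r, by rw [Category.assoc, reassoc_of% w', w]⟩

theorem mem_smd_of_iso {P : Set C} {X Y : C} (e : X ≅ Y) (hX : X ∈ smd C P) : Y ∈ smd C P :=
  mem_smd_of_retract hX e.inv e.hom e.inv_hom_id

theorem smd_subset_smd_iff {P Q : Set C} : smd C P ⊆ smd C Q ↔ P ⊆ smd C Q :=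
  ⟨(subset_smd P).trans, fun h _ ⟨_, hY, i, r, w⟩ => mem_smd_of_retract (h hY) i r w⟩

end Retracts

section Star

variable {C}
omit [HasCoproducts.{v} C]

theorem mem_star_of_distTriang {P Q : Set C} {T : Triangle C} (hT : T ∈ distTriang C)
    (h₁ : T.obj₁ ∈ P) (h₃ : T.obj₃ ∈ Q) : T.obj₂ ∈ P ⋆ Q :=
  ⟨_, _, T.mor₁, T.mor₂, T.mor₃, hT, h₁, h₃⟩

theorem star_mono {P Q P' Q' : Set C} (hP : P ⊆ P') (hQ : Q ⊆ Q') : P ⋆ Q ⊆ P' ⋆ Q' :=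
  fun _ ⟨X, Z, f, g, h, hT, hX, hZ⟩ => ⟨X, Z, f, g, h, hT, hP hX, hQ hZ⟩

theorem exists_distTriang_of_iso {T : Triangle C} (hT : T ∈ distTriang C) {X Y Z : C}
    (e₁ : T.obj₁ ≅ X) (e₂ : T.obj₂ ≅ Y) (e₃ : T.obj₃ ≅ Z) :
    ∃ (f : X ⟶ Y) (g : Y ⟶ Z) (h : Z ⟶ X⟦(1 : ℤ)⟧), Triangle.mk f g h ∈ distTriang C :=
  ⟨e₁.inv ≫ T.mor₁ ≫ e₂.hom, e₂.inv ≫ T.mor₂ ≫ e₃.hom, e₃.inv ≫ T.mor₃ ≫ e₁.hom⟦(1 : ℤ)⟧',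
    isomorphic_distinguished _ hT _ (Triangle.isoMk _ _ e₁.symm e₂.symm e₃.symm
      (show (e₁.inv ≫ T.mor₁ ≫ e₂.hom) ≫ e₂.inv = e₁.inv ≫ T.mor₁ by simp)
      (show (e₂.inv ≫ T.mor₂ ≫ e₃.hom) ≫ e₃.inv = e₂.inv ≫ T.mor₂ by simp)
      (show (e₃.inv ≫ T.mor₃ ≫ e₁.hom⟦(1 : ℤ)⟧') ≫ e₁.inv⟦(1 : ℤ)⟧' = e₃.inv ≫ T.mor₃ by
        simp only [Category.assoc, ← Functor.map_comp, e₁.hom_inv_id,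
          CategoryTheory.Functor.map_id, Category.comp_id]))⟩

theorem mem_star_of_iso {P Q : Set C} {Y Y' : C} (e : Y ≅ Y') (hY : Y ∈ P ⋆ Q) : Y' ∈ P ⋆ Q := by
  obtain ⟨X, Z, f, g, h, hT, hX, hZ⟩ := hY
  obtain ⟨f', g', h', hT'⟩ := exists_distTriang_of_iso hT (Iso.refl X) e (Iso.refl Z)
  exact ⟨X, Z, f', g', h', hT', hX, hZ⟩

theorem subset_star_left {P Q : Set C} (hQ : ∀ Z : C, IsZero Z → Z ∈ Q) : P ⊆ P ⋆ Q :=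
  fun Y hY => mem_star_of_distTriang (contractible_distinguished Y) hY (hQ _ (isZero_zero C))

theorem subset_star_right {P Q : Set C} (hP : ∀ Z : C, IsZero Z → Z ∈ P) : Q ⊆ P ⋆ Q :=
  fun Y hY => mem_star_of_distTriang (contractible_distinguished₁ Y) (hP _ (isZero_zero C)) hY

theorem biprod_mem_star {P Q : Set C} {X Y : C} (hX : X ∈ P) (hY : Y ∈ Q) : (X ⊞ Y) ∈ P ⋆ Q :=
  mem_star_of_distTriang (binaryBiproductTriangle_distinguished X Y) hX hY

theorem isIso_of_distTriang {X Y Z : C} {f : X ⟶ Y} {g : Y ⟶ Z} {h : Z ⟶ X⟦(1 : ℤ)⟧}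
    (hT : Triangle.mk f g h ∈ distTriang C) {b : Y ⟶ Y} (hf : f ≫ b = f) (hg : b ≫ g = g) :
    IsIso b :=
  isIso₂_of_isIso₁₃
    (Triangle.homMk (Triangle.mk f g h) (Triangle.mk f g h) (𝟙 X) b (𝟙 Z)
      (show f ≫ b = 𝟙 X ≫ f by rw [hf, Category.id_comp])
      (show g ≫ 𝟙 Z = b ≫ g by rw [hg, Category.comp_id])
      (show h ≫ (𝟙 X)⟦(1 : ℤ)⟧' = 𝟙 Z ≫ h by simp))
    hT hT (IsIso.id X) (IsIso.id Z)

theorem star_smd_subset {P Q : Set C} : smd C P ⋆ smd C Q ⊆ smd C (P ⋆ Q) := by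
  rintro Y ⟨X, Z, f, g, h, hT, ⟨X₁, hX₁, iX, rX, wX⟩, ⟨Z₁, hZ₁, iZ, rZ, wZ⟩⟩
  obtain ⟨Y₁, f₁, g₁, hT₁⟩ := distinguished_cocone_triangle₂ (rZ ≫ h ≫ iX⟦(1 : ℤ)⟧')
  obtain ⟨i, hi₁, hi₂⟩ : ∃ i : Y ⟶ Y₁, f ≫ i = iX ≫ f₁ ∧ g ≫ iZ = i ≫ g₁ :=
    complete_distinguished_triangle_morphism₂ _ _ hT hT₁ iX iZ
      (show h ≫ iX⟦(1 : ℤ)⟧' = iZ ≫ rZ ≫ h ≫ iX⟦(1 : ℤ)⟧' by rw [reassoc_of% wZ])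
  obtain ⟨r, hr₁, hr₂⟩ : ∃ r : Y₁ ⟶ Y, f₁ ≫ r = rX ≫ f ∧ g₁ ≫ rZ = r ≫ g :=
    complete_distinguished_triangle_morphism₂ _ _ hT₁ hT rX rZ
      (show (rZ ≫ h ≫ iX⟦(1 : ℤ)⟧') ≫ rX⟦(1 : ℤ)⟧' = rZ ≫ h by
        simp only [Category.assoc, ← Functor.map_comp, wX, CategoryTheory.Functor.map_id,
          Category.comp_id])
  have : IsIso (i ≫ r) := isIso_of_distTriang hT
    (by rw [reassoc_of% hi₁, hr₁, reassoc_of% wX])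
    (by rw [Category.assoc, ← hr₂, ← reassoc_of% hi₂, wZ, Category.comp_id])
  exact ⟨Y₁, ⟨X₁, Z₁, f₁, g₁, _, hT₁, hX₁, hZ₁⟩, i, r ≫ inv (i ≫ r),
    by rw [← Category.assoc, IsIso.hom_inv_id]⟩

theorem exists_iso_biprod_of_mem_smd {P : Set C} {X : C} (hX : X ∈ smd C P) :
    ∃ V ∈ P, ∃ Y, Nonempty (V ≅ X ⊞ Y) := by
  obtain ⟨V, hV, i, r, w⟩ := hX
  obtain ⟨Y, g, h, hT⟩ := distinguished_cocone_triangle i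
  have h_zero : h = 0 := by
    have : SplitMono i := ⟨r, w⟩
    have : IsSplitMono (i⟦(1 : ℤ)⟧') := IsSplitMono.mk' (this.map (shiftFunctor C (1 : ℤ)))
    exact (cancel_mono (i⟦(1 : ℤ)⟧')).1
      ((comp_distTriang_mor_zero₃₁ _ hT).trans zero_comp.symm)
  obtain ⟨e, _⟩ := exists_iso_binaryBiproduct_of_distTriang _ hT h_zero
  exact ⟨V, hV, Y, ⟨e⟩⟩

end Star

section Orthogonal

variable {C}
omit [HasCoproducts.{v} C]

theorem star_subset_lOrth {S : Set C} : lOrth C S ⋆ lOrth C S ⊆ lOrth C S := by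
  rintro Y ⟨X, Z, f, g, h, hT, hX, hZ⟩ W hW k
  obtain ⟨l, rfl⟩ : ∃ l : Z ⟶ W, k = g ≫ l := Triangle.yoneda_exact₂ _ hT k (hX W hW _)
  rw [hZ W hW l, comp_zero]

omit [HasZeroObject C] [HasShift C ℤ] [∀ n : ℤ, (shiftFunctor C n).Additive]
  [Pretriangulated C] in
theorem smd_subset_lOrth {S : Set C} : smd C (lOrth C S) ⊆ lOrth C S := by
  rintro X ⟨Y, hY, i, r, w⟩ W hW k
  rw [← Category.id_comp k, ← w, Category.assoc, hY W hW (r ≫ k), comp_zero]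

theorem mem_smd_of_mem_star_of_hom_eq_zero {P S : Set C} {K : C} (hK : K ∈ P ⋆ S)
    (hKS : K ∈ lOrth C S) : K ∈ smd C P := by
  obtain ⟨E, D, f, g, h, hT, hE, hD⟩ := hK
  obtain ⟨s, hs⟩ := Triangle.coyoneda_exact₂ _ hT (𝟙 K)
    (show 𝟙 K ≫ g = 0 by rw [hKS D hD g, comp_zero])
  exact ⟨E, hE, s, f, hs.symm⟩

end Orthogonal

section EquivMod

variable {C}
omit [HasCoproducts.{v} C]

theorem yoneda_exact₁ {T : Triangle C} (hT : T ∈ distTriang C) {W : C} (k : T.obj₁⟦(1 : ℤ)⟧ ⟶ W)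
    (hk : T.mor₃ ≫ k = 0) : ∃ l : T.obj₂⟦(1 : ℤ)⟧ ⟶ W, k = T.mor₁⟦(1 : ℤ)⟧' ≫ l := by
  obtain ⟨l, hl⟩ : ∃ l : T.obj₂⟦(1 : ℤ)⟧ ⟶ W, k = (-T.mor₁⟦(1 : ℤ)⟧') ≫ l :=
    Triangle.yoneda_exact₃ _ (rot_of_distTriang _ hT) k hk
  exact ⟨-l, by rw [hl, Preadditive.neg_comp, Preadditive.comp_neg]⟩

theorem yoneda_exact₂_shift {T : Triangle C} (hT : T ∈ distTriang C) {W : C}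
    (k : T.obj₂⟦(1 : ℤ)⟧ ⟶ W) (hk : T.mor₁⟦(1 : ℤ)⟧' ≫ k = 0) :
    ∃ l : T.obj₃⟦(1 : ℤ)⟧ ⟶ W, k = T.mor₂⟦(1 : ℤ)⟧' ≫ l :=
  yoneda_exact₁ (rot_of_distTriang _ hT) k
    (show (-T.mor₁⟦(1 : ℤ)⟧') ≫ k = 0 by rw [Preadditive.neg_comp, hk, neg_zero])

/-- `f : X ⟶ Y` is an equivalence modulo `S` if `Hom(f, W)` is injective and `Hom(Σf, W)` is
surjective for every `W` in the right orthogonal of `S`. By `isEquivMod_mor₁_iff` this says that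
the cone of `f` lies in `⊥(S^⊥)`; phrased through `Hom(-, W)`, the notion can be handled by
diagram chases, which compensates for the absence of the octahedral axiom. -/
def IsEquivMod (S : Set C) {X Y : C} (f : X ⟶ Y) : Prop :=
  ∀ W ∈ rOrth C S, (∀ k : Y ⟶ W, f ≫ k = 0 → k = 0) ∧
    ∀ e : X⟦(1 : ℤ)⟧ ⟶ W, ∃ k : Y⟦(1 : ℤ)⟧ ⟶ W, e = f⟦(1 : ℤ)⟧' ≫ k

theorem isEquivMod_mor₁_iff {S : Set C} {T : Triangle C} (hT : T ∈ distTriang C) :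
    IsEquivMod S T.mor₁ ↔ T.obj₃ ∈ lOrth C (rOrth C S) := by
  refine ⟨fun hf W hW k => ?_, fun hZ W hW => ⟨fun k hk => ?_, fun e => ?_⟩⟩
  · have hk : T.mor₂ ≫ k = 0 :=
      (hf W hW).1 _ (by rw [← Category.assoc, comp_distTriang_mor_zero₁₂ _ hT, zero_comp])
    obtain ⟨l, rfl⟩ := Triangle.yoneda_exact₃ _ hT k hk
    obtain ⟨m, rfl⟩ := (hf W hW).2 l
    rw [← Category.assoc, comp_distTriang_mor_zero₃₁ _ hT, zero_comp]
  · obtain ⟨l, rfl⟩ := Triangle.yoneda_exact₂ _ hT k hk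
    rw [hZ W hW l, comp_zero]
  · exact yoneda_exact₁ hT e (hZ W hW _)

theorem isEquivMod_of_distTriang {S : Set C} {T : Triangle C} (hT : T ∈ distTriang C)
    (hS : T.obj₃ ∈ S) : IsEquivMod S T.mor₁ :=
  (isEquivMod_mor₁_iff hT).2 fun _ hW f => hW _ hS f

omit [HasZeroObject C] [∀ n : ℤ, (shiftFunctor C n).Additive] [Pretriangulated C] in
theorem IsEquivMod.id (S : Set C) (X : C) : IsEquivMod S (𝟙 X) := fun _ _ =>
  ⟨fun k hk => by rwa [Category.id_comp] at hk, fun e => ⟨e, by simp⟩⟩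

omit [HasZeroObject C] [∀ n : ℤ, (shiftFunctor C n).Additive] [Pretriangulated C] in
theorem IsEquivMod.comp {S : Set C} {X Y Z : C} {f : X ⟶ Y} {g : Y ⟶ Z} (hf : IsEquivMod S f)
    (hg : IsEquivMod S g) : IsEquivMod S (f ≫ g) := by
  intro W hW
  refine ⟨fun k hk => (hg W hW).1 _ ((hf W hW).1 _ (by rwa [← Category.assoc])), fun e => ?_⟩
  obtain ⟨k, rfl⟩ := (hf W hW).2 e
  obtain ⟨l, rfl⟩ := (hg W hW).2 k
  exact ⟨l, by rw [Functor.map_comp, Category.assoc]⟩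

omit [HasZeroObject C] [Pretriangulated C] in
theorem IsEquivMod.neg {S : Set C} {X Y : C} {f : X ⟶ Y} (hf : IsEquivMod S f) :
    IsEquivMod S (-f) := by
  intro W hW
  refine ⟨fun k hk => (hf W hW).1 k (by rwa [Preadditive.neg_comp, neg_eq_zero] at hk),
    fun e => ?_⟩
  obtain ⟨k, rfl⟩ := (hf W hW).2 e
  exact ⟨-k, by rw [Functor.map_neg, Preadditive.neg_comp, Preadditive.comp_neg, neg_neg]⟩

theorem isEquivMod_shift_of_distTriang {S : Set C} {T : Triangle C} (hT : T ∈ distTriang C)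
    (hS : T.obj₃⟦(1 : ℤ)⟧ ∈ S) : IsEquivMod S (T.mor₁⟦(1 : ℤ)⟧') := by
  have h : IsEquivMod S (-T.mor₁⟦(1 : ℤ)⟧') := isEquivMod_of_distTriang
    (rot_of_distTriang _ (rot_of_distTriang _ (rot_of_distTriang _ hT))) hS
  rw [← neg_neg (T.mor₁⟦(1 : ℤ)⟧')]
  exact h.neg

theorem isEquivMod_biprod_fst {S : Set C} {X Y : C} (hY : Y⟦(1 : ℤ)⟧ ∈ S) :
    IsEquivMod S (biprod.fst : X ⊞ Y ⟶ X) := by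
  refine fun W hW => ⟨fun k hk => ?_, fun e => ⟨biprod.inl⟦(1 : ℤ)⟧' ≫ e, ?_⟩⟩
  · rw [← Category.id_comp k, ← biprod.inl_fst, Category.assoc, hk, comp_zero]
  · have h_inr : (biprod.inr : Y ⟶ X ⊞ Y)⟦(1 : ℤ)⟧' ≫ e = 0 := hW _ hY _
    calc e = (𝟙 (X ⊞ Y))⟦(1 : ℤ)⟧' ≫ e := by simp
      _ = biprod.fst⟦(1 : ℤ)⟧' ≫ biprod.inl⟦(1 : ℤ)⟧' ≫ e := by
        rw [← biprod.total, Functor.map_add, Functor.map_comp, Functor.map_comp,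
          Preadditive.add_comp, Category.assoc, Category.assoc, h_inr, comp_zero, add_zero]

section TwoOutOfThree

variable {S : Set C} {T T' : Triangle C} (hT : T ∈ distTriang C) (hT' : T' ∈ distTriang C)
  (φ : T ⟶ T') {W : C}

include hT hT'

theorem hom₂_comp_injective
    (h₁ : ∀ k : T'.obj₁ ⟶ W, φ.hom₁ ≫ k = 0 → k = 0)
    (h₁' : ∀ e : T.obj₁⟦(1 : ℤ)⟧ ⟶ W, ∃ k : T'.obj₁⟦(1 : ℤ)⟧ ⟶ W, e = φ.hom₁⟦(1 : ℤ)⟧' ≫ k)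
    (h₃ : ∀ k : T'.obj₃ ⟶ W, φ.hom₃ ≫ k = 0 → k = 0)
    (k : T'.obj₂ ⟶ W) (hk : φ.hom₂ ≫ k = 0) : k = 0 := by
  obtain ⟨z, rfl⟩ := Triangle.yoneda_exact₂ _ hT' k
    (h₁ _ (by rw [← Category.assoc, ← φ.comm₁, Category.assoc, hk, comp_zero]))
  obtain ⟨x, hx⟩ := Triangle.yoneda_exact₃ _ hT (φ.hom₃ ≫ z)
    (by rw [reassoc_of% φ.comm₂, hk])
  obtain ⟨x', rfl⟩ := h₁' x
  have hz : z = T'.mor₃ ≫ x' := sub_eq_zero.1 (h₃ _ (by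
    rw [Preadditive.comp_sub, hx, reassoc_of% φ.comm₃, sub_self]))
  rw [hz, ← Category.assoc, comp_distTriang_mor_zero₂₃ _ hT', zero_comp]

theorem hom₂_shift_comp_surjective
    (h₁ : ∀ e : T.obj₁⟦(1 : ℤ)⟧ ⟶ W, ∃ k : T'.obj₁⟦(1 : ℤ)⟧ ⟶ W, e = φ.hom₁⟦(1 : ℤ)⟧' ≫ k)
    (h₃ : ∀ k : T'.obj₃ ⟶ W, φ.hom₃ ≫ k = 0 → k = 0)
    (h₃' : ∀ e : T.obj₃⟦(1 : ℤ)⟧ ⟶ W, ∃ k : T'.obj₃⟦(1 : ℤ)⟧ ⟶ W, e = φ.hom₃⟦(1 : ℤ)⟧' ≫ k)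
    (e : T.obj₂⟦(1 : ℤ)⟧ ⟶ W) : ∃ k : T'.obj₂⟦(1 : ℤ)⟧ ⟶ W, e = φ.hom₂⟦(1 : ℤ)⟧' ≫ k := by
  obtain ⟨x, hx⟩ := h₁ (T.mor₁⟦(1 : ℤ)⟧' ≫ e)
  obtain ⟨y, rfl⟩ := yoneda_exact₁ hT' x (h₃ _ (by
    rw [← reassoc_of% φ.comm₃, ← hx, ← Category.assoc, comp_distTriang_mor_zero₃₁ _ hT,
      zero_comp]))
  obtain ⟨z, hz⟩ := yoneda_exact₂_shift hT (e - φ.hom₂⟦(1 : ℤ)⟧' ≫ y) (by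
    rw [Preadditive.comp_sub, hx, ← Functor.map_comp_assoc, ← Functor.map_comp_assoc, φ.comm₁,
      sub_self])
  obtain ⟨z', rfl⟩ := h₃' z
  refine ⟨y + T'.mor₂⟦(1 : ℤ)⟧' ≫ z', ?_⟩
  rw [Preadditive.comp_add, ← Functor.map_comp_assoc, ← φ.comm₂, Functor.map_comp_assoc, ← hz,
    add_sub_cancel]

theorem IsEquivMod.hom₂ (h₁ : IsEquivMod S φ.hom₁) (h₃ : IsEquivMod S φ.hom₃) :
    IsEquivMod S φ.hom₂ := fun W hW =>
  ⟨hom₂_comp_injective hT hT' φ (h₁ W hW).1 (h₁ W hW).2 (h₃ W hW).1,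
    hom₂_shift_comp_surjective hT hT' φ (h₁ W hW).2 (h₃ W hW).1 (h₃ W hW).2⟩

end TwoOutOfThree

theorem mem_star_of_isEquivMod {P S : Set C} (hS : lOrth C (rOrth C S) = S) {E K : C} {f : E ⟶ K}
    (hE : E ∈ P) (hf : IsEquivMod S f) : K ∈ P ⋆ S := by
  obtain ⟨Z, g, h, hT⟩ := distinguished_cocone_triangle f
  have hZ : Z ∈ lOrth C (rOrth C S) := (isEquivMod_mor₁_iff hT).1 hf
  exact ⟨E, Z, f, g, h, hT, hE, hS ▸ hZ⟩

theorem star_star_subset {P Q S : Set C} (hS : lOrth C (rOrth C S) = S) :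
    P ⋆ (Q ⋆ S) ⊆ (P ⋆ Q) ⋆ S := by
  rintro Y ⟨X, Z, f, g, h, hT, hX, E, D, e, d, δ, hZ, hE, hD⟩
  obtain ⟨F, f', g', hF⟩ := distinguished_cocone_triangle₂ (e ≫ h)
  have w : (e ≫ h) ≫ (𝟙 X)⟦(1 : ℤ)⟧' = e ≫ h := by simp
  obtain ⟨b, hb₁, hb₂⟩ : ∃ b : F ⟶ Y, f' ≫ b = 𝟙 X ≫ f ∧ g' ≫ e = b ≫ g :=
    complete_distinguished_triangle_morphism₂ _ _ hF hT (𝟙 X) e w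
  have hb : IsEquivMod S b := IsEquivMod.hom₂ hF hT (Triangle.homMk _ _ (𝟙 X) b e hb₁ hb₂ w)
    (IsEquivMod.id S X) (isEquivMod_of_distTriang hZ hD)
  exact mem_star_of_isEquivMod hS (mem_star_of_distTriang hF hX hE) hb

theorem mem_star_of_biprod_mem_star {P S : Set C} (hS : lOrth C (rOrth C S) = S) {X Y : C}
    (h : (X ⊞ Y) ∈ P ⋆ S) (hY : Y⟦(1 : ℤ)⟧ ∈ S) : X ∈ P ⋆ S := by
  obtain ⟨E, D, f, g, δ, hT, hE, hD⟩ := h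
  exact mem_star_of_isEquivMod hS hE
    ((isEquivMod_of_distTriang hT hD).comp (isEquivMod_biprod_fst hY))

theorem obj₃_mem_star {P Q S S₁ S₂ : Set C} (hS : lOrth C (rOrth C S) = S) {T : Triangle C}
    (hT : T ∈ distTriang C) (h₁ : T.obj₁ ∈ P ⋆ S₁) (h₂ : T.obj₂ ∈ Q ⋆ S₂) (hP : P ⊆ lOrth C S₂)
    (hS₁ : shiftSet C 1 S₁ ⊆ S) (hS₂ : S₂ ⊆ S) : T.obj₃ ∈ (Q ⋆ shiftSet C 1 P) ⋆ S := by
  obtain ⟨E₁, D₁, e₁, d₁, δ₁, hT₁, hE₁, hD₁⟩ := h₁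
  obtain ⟨E₂, D₂, e₂, d₂, δ₂, hT₂, hE₂, hD₂⟩ := h₂
  obtain ⟨φ, hφ⟩ : ∃ φ : E₁ ⟶ E₂, e₁ ≫ T.mor₁ = φ ≫ e₂ :=
    Triangle.coyoneda_exact₂ _ hT₂ (e₁ ≫ T.mor₁) (hP hE₁ D₂ hD₂ _)
  obtain ⟨E₃, g, h, hE₃⟩ := distinguished_cocone_triangle φ
  let ψ : Triangle.mk φ g h ⟶ T := completeDistinguishedTriangleMorphism _ _ hE₃ hT e₁ e₂ hφ.symm
  have hψ : IsEquivMod S ψ.hom₃ := IsEquivMod.hom₂ (rot_of_distTriang _ hE₃)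
    (rot_of_distTriang _ hT) ((rotate C).map ψ)
    (isEquivMod_of_distTriang hT₂ (hS₂ hD₂))
    (isEquivMod_shift_of_distTriang hT₁ (hS₁ ⟨D₁, hD₁, ⟨Iso.refl _⟩⟩))
  exact mem_star_of_isEquivMod hS
    (mem_star_of_distTriang (rot_of_distTriang _ hE₃) hE₂ ⟨E₁, hE₁, ⟨Iso.refl _⟩⟩) hψ

end EquivMod

section SmdCoprod

variable {C}
omit [HasCoproducts.{v} C]

/-- `smd(coprod(U))`, the closure of `U` under finite direct sums, extensions and direct
summands; `gInt` and `gIic` are instances of it. -/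
def smdCoprod (U : Set C) : Set C := smd C {X | extClosure C U X}

theorem subset_smdCoprod (U : Set C) : U ⊆ smdCoprod U := fun _ hX => subset_smd _ (.of hX)

theorem mem_smdCoprod_of_isZero (U : Set C) (X : C) (hX : IsZero X) : X ∈ smdCoprod U :=
  subset_smd _ (.zero hX)

theorem star_smdCoprod_subset (U : Set C) : smdCoprod U ⋆ smdCoprod U ⊆ smdCoprod U :=
  star_smd_subset.trans (smd_mono fun _ ⟨_, _, f, g, h, hT, hX, hZ⟩ => .ext f g h hT hX hZ)

theorem smdCoprod_subset {U P : Set C} (hU : U ⊆ P) (h_zero : ∀ X : C, IsZero X → X ∈ P)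
    (h_star : P ⋆ P ⊆ P) (h_smd : smd C P ⊆ P) : smdCoprod U ⊆ P := by
  refine (smd_mono fun X hX => ?_).trans h_smd
  change extClosure C U X at hX
  induction hX with
  | of h => exact hU h
  | zero h => exact h_zero _ h
  | ext f g h hT _ _ hX hZ => exact h_star ⟨_, _, f, g, h, hT, hX, hZ⟩

theorem smdCoprod_mono {U V : Set C} (h : U ⊆ V) : smdCoprod U ⊆ smdCoprod V :=
  smdCoprod_subset (h.trans (subset_smdCoprod V)) (mem_smdCoprod_of_isZero V)
    (star_smdCoprod_subset V) (smd_subset_smd_iff.2 subset_rfl)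

theorem smdCoprod_subset_lOrth {U S : Set C} (h : U ⊆ lOrth C S) : smdCoprod U ⊆ lOrth C S :=
  smdCoprod_subset h (fun _ hX _ _ _ => hX.eq_of_src _ _) star_subset_lOrth smd_subset_lOrth

theorem shift_smdCoprod_subset {U V : Set C} {n : ℤ} (h : shiftSet C n U ⊆ smdCoprod V) :
    shiftSet C n (smdCoprod U) ⊆ smdCoprod V := by
  have h_shift : smdCoprod U ⊆ {X | X⟦n⟧ ∈ smdCoprod V} := by
    refine smdCoprod_subset (fun X hX => h ⟨X, hX, ⟨Iso.refl _⟩⟩)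
      (fun X hX => mem_smdCoprod_of_isZero V _ ((shiftFunctor C n).map_isZero hX)) ?_ ?_
    · rintro Y ⟨X, Z, f, g, h, hT, hX, hZ⟩
      exact star_smdCoprod_subset V
        (mem_star_of_distTriang (Triangle.shift_distinguished _ hT n) hX hZ)
    · rintro X ⟨Y, hY, i, r, w⟩
      exact mem_smd_of_retract hY (i⟦n⟧') (r⟦n⟧')
        (by rw [← Functor.map_comp, w, CategoryTheory.Functor.map_id])
  rintro Y ⟨X, hX, ⟨e⟩⟩
  exact mem_smd_of_iso e.symm (h_shift hX)

end SmdCoprod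

section Metric

variable {C}
omit [HasCoproducts.{v} C]
variable {M : ℤ → Set C}

theorem IsExtGoodMetric.subset_of_le (hM : IsExtGoodMetric C M) {i j : ℤ} (h : i ≤ j) :
    M j ⊆ M i :=
  antitone_int_of_succ_le hM.antitone h

theorem IsExtGoodMetric.shift_mem (hM : IsExtGoodMetric C M) {s i j : ℤ} (h : j + |s| ≤ i)
    {X : C} (hX : X ∈ M i) : X⟦s⟧ ∈ M j := by
  induction s using Int.induction_on generalizing j with
  | zero =>
    exact hM.iso_closed _ ((shiftFunctorZero C ℤ).app X).symm
      (hM.subset_of_le (by simpa using h) hX)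
  | succ n ih =>
    have hs : |(n : ℤ)| + 1 = |(n : ℤ) + 1| := by rw [abs_of_nonneg, abs_of_nonneg] <;> omega
    exact hM.shift_one j ⟨_, ih (by omega), ⟨(shiftFunctorAdd C (n : ℤ) 1).app X⟩⟩
  | pred n ih =>
    have hs : |-(n : ℤ)| + 1 = |-(n : ℤ) - 1| := by
      rw [abs_of_nonpos, abs_of_nonpos] <;> omega
    exact hM.shift_neg_one j ⟨_, ih (by omega), ⟨(shiftFunctorAdd C (-n : ℤ) (-1)).app X⟩⟩

end Metric

section GeneratingSequence

variable {C} {G : ℤ → Set C}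

omit [HasCoproducts.{v} C] in
theorem gInt_mono {a b a' b' : ℤ} (ha : a' ≤ a) (hb : b ≤ b') :
    gInt C G a b ⊆ gInt C G a' b' :=
  smdCoprod_mono (Set.biUnion_subset_biUnion_left (Set.Icc_subset_Icc ha hb))

omit [HasCoproducts.{v} C] in
theorem gInt_subset_gIic {a b b' : ℤ} (hb : b ≤ b') : gInt C G a b ⊆ gIic C G b' :=
  smdCoprod_mono (Set.biUnion_subset_biUnion_left fun _ hx => hx.2.trans hb)

omit [HasCoproducts.{v} C] in
theorem gInt_subset_lOrth {S : Set C} {a b : ℤ} (h : ∀ m, a ≤ m → homZero C (G m) S) :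
    gInt C G a b ⊆ lOrth C S :=
  smdCoprod_subset_lOrth (Set.iUnion₂_subset fun m hm => h m hm.1)

theorem IsGenSeq.shift_one_gInt_subset (hG : IsGenSeq C G) (a b : ℤ) :
    shiftSet C 1 (gInt C G a b) ⊆ gInt C G (a - 1) (b + 1) := by
  refine shift_smdCoprod_subset ?_
  rintro Y ⟨X, hX, e⟩
  obtain ⟨m, ⟨ha, hb⟩, hX⟩ := Set.mem_iUnion₂.1 hX
  exact gInt_mono (by omega) (by omega) (hG.shift_cond m (Or.inr ⟨X, hX, e⟩))

theorem IsGenSeq.gInt_subset_compacts (hG : IsGenSeq C G) (a b : ℤ) :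
    gInt C G a b ⊆ compacts C :=
  hG.generates ▸ smdCoprod_mono (Set.iUnion₂_subset fun m _ => Set.subset_iUnion G m)

theorem IsGenSeq.shift_compacts_subset (hG : IsGenSeq C G) {n : ℤ}
    (h : ∀ m, shiftSet C n (G m) ⊆ gInt C G (m - 1) (m + 1)) :
    shiftSet C n (compacts C) ⊆ compacts C := by
  rw [← hG.generates]
  refine shift_smdCoprod_subset ?_
  rintro Y ⟨X, hX, e⟩
  obtain ⟨m, hX⟩ := Set.mem_iUnion.1 hX
  exact hG.generates.ge (hG.gInt_subset_compacts _ _ (h m ⟨X, hX, e⟩))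

/-- Viewing `T^c` as a constant metric makes the shift lemmas for metrics available for it. -/
theorem IsGenSeq.isExtGoodMetric_compacts (hG : IsGenSeq C G) :
    IsExtGoodMetric C fun _ => compacts C where
  zero_mem _ X hX := hG.generates ▸ mem_smdCoprod_of_isZero _ X hX
  iso_closed _ X Y e hX := by
    rw [← hG.generates] at hX ⊢
    exact mem_smd_of_iso e hX
  star_subset _ := hG.generates ▸ star_smdCoprod_subset _
  shift_one _ := hG.shift_compacts_subset fun m _ hY => hG.shift_cond m (Or.inr hY)
  antitone _ := subset_rfl
  shift_neg_one _ := hG.shift_compacts_subset fun m _ hY => hG.shift_cond m (Or.inl (Or.inl hY))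

theorem IsGenSeq.exists_mem_lOrth (hG : IsGenSeq C G) {M : ℤ → Set C}
    (hM : IsExtGoodMetric C M)
    (h : ∀ n : ℤ, ∃ N : ℤ, ∀ i : ℤ, N ≤ i → homZero C (G n) (M i)) {K : C}
    (hK : K ∈ compacts C) : ∃ N : ℤ, K ∈ lOrth C (M N) := by
  have lOrth_mono : ∀ {i j : ℤ}, i ≤ j → lOrth C (M i) ⊆ lOrth C (M j) :=
    fun hij _ hX W hW => hX W (hM.subset_of_le hij hW)
  rw [← hG.generates] at hK
  refine smdCoprod_subset (P := {K | ∃ N : ℤ, K ∈ lOrth C (M N)})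
    (Set.iUnion_subset fun m X hX => ?_) (fun X hX => ⟨0, fun _ _ _ => hX.eq_of_src _ _⟩) ?_ ?_ hK
  · obtain ⟨N, hN⟩ := h m
    exact ⟨N, hN N le_rfl X hX⟩
  · rintro Y ⟨X, Z, f, g, h, hT, ⟨N, hX⟩, ⟨N', hZ⟩⟩
    exact ⟨max N N', star_subset_lOrth ⟨X, Z, f, g, h, hT, lOrth_mono (le_max_left _ _) hX,
      lOrth_mono (le_max_right _ _) hZ⟩⟩
  · rintro X ⟨Y, ⟨N, hY⟩, i, r, w⟩
    exact ⟨N, smd_subset_lOrth ⟨Y, hY, i, r, w⟩⟩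

end GeneratingSequence

section AdditiveClass

variable {C}
omit [HasCoproducts.{v} C]

theorem exists_distTriang_biprod {T T' : Triangle C} (hT : T ∈ distTriang C)
    (hT' : T' ∈ distTriang C) :
    ∃ (f : T.obj₁ ⊞ T'.obj₁ ⟶ T.obj₂ ⊞ T'.obj₂) (g : T.obj₂ ⊞ T'.obj₂ ⟶ T.obj₃ ⊞ T'.obj₃)
      (h : T.obj₃ ⊞ T'.obj₃ ⟶ (T.obj₁ ⊞ T'.obj₁)⟦(1 : ℤ)⟧), Triangle.mk f g h ∈ distTriang C := by
  let F : WalkingPair → Triangle C := fun j => WalkingPair.casesOn j T T'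
  have isoBiprod (X : WalkingPair → C) : (∏ᶜ X) ≅ X .left ⊞ X .right :=
    HasLimit.isoOfNatIso (diagramIsoPair _) ≪≫ (biprod.isoProd _ _).symm
  exact exists_distTriang_of_iso
    (productTriangle_distinguished F (by rintro (_ | _); exacts [hT, hT']))
    (isoBiprod fun j => (F j).obj₁) (isoBiprod fun j => (F j).obj₂) (isoBiprod fun j => (F j).obj₃)

/-- A class of objects containing the zero objects and closed under binary biproducts. Closure
under isomorphisms is not required. -/
structure IsAdditiveClass (P : Set C) : Prop where
  zero_mem : ∀ X : C, IsZero X → X ∈ P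
  biprod_mem : ∀ ⦃X Y : C⦄, X ∈ P → Y ∈ P → (X ⊞ Y) ∈ P

theorem IsAdditiveClass.star {P Q : Set C} (hP : IsAdditiveClass P) (hQ : IsAdditiveClass Q) :
    IsAdditiveClass (P ⋆ Q) where
  zero_mem X hX := subset_star_right hP.zero_mem (hQ.zero_mem X hX)
  biprod_mem := by
    rintro Y Y' ⟨X, Z, f, g, h, hT, hX, hZ⟩ ⟨X', Z', f', g', h', hT', hX', hZ'⟩
    obtain ⟨f₀, g₀, h₀, hT₀⟩ := exists_distTriang_biprod hT hT'
    exact ⟨_, _, f₀, g₀, h₀, hT₀, hP.biprod_mem hX hX', hQ.biprod_mem hZ hZ'⟩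

theorem isAdditiveClass_isZero : IsAdditiveClass {X : C | IsZero X} where
  zero_mem _ hX := hX
  biprod_mem X Y hX hY := by
    rw [Set.mem_ofPred_eq] at *
    rw [IsZero.iff_id_eq_zero]
    ext <;> first | exact hX.eq_of_src _ _ | exact hY.eq_of_src _ _

theorem isAdditiveClass_smdCoprod (U : Set C) : IsAdditiveClass (smdCoprod U) where
  zero_mem := mem_smdCoprod_of_isZero U
  biprod_mem _ _ hX hY := star_smdCoprod_subset U (biprod_mem_star hX hY)

end AdditiveClass

section FactorsThrough

variable {C} {P Q : Set C}
omit [HasCoproducts.{v} C]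

/-- The morphism `g` factors through an object of `P`. -/
def FactorsThrough (P : Set C) {K Y : C} (g : K ⟶ Y) : Prop :=
  ∃ V ∈ P, ∃ (u : K ⟶ V) (v : V ⟶ Y), u ≫ v = g

omit [HasZeroObject C] [HasShift C ℤ] [Preadditive C] [∀ n : ℤ, (shiftFunctor C n).Additive]
  [Pretriangulated C] in
theorem mem_smd_iff_factorsThrough_id {X : C} : X ∈ smd C P ↔ FactorsThrough P (𝟙 X) :=
  Iff.rfl

omit [HasZeroObject C] [HasShift C ℤ] [Preadditive C] [∀ n : ℤ, (shiftFunctor C n).Additive]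
  [Pretriangulated C] in
theorem FactorsThrough.comp_right {K Y Z : C} {g : K ⟶ Y} (hg : FactorsThrough P g) (f : Y ⟶ Z) :
    FactorsThrough P (g ≫ f) := by
  obtain ⟨V, hV, u, v, rfl⟩ := hg
  exact ⟨V, hV, u, v ≫ f, (Category.assoc _ _ _).symm⟩

theorem FactorsThrough.add (hP : IsAdditiveClass P) {K Y : C} {g g' : K ⟶ Y}
    (hg : FactorsThrough P g) (hg' : FactorsThrough P g') : FactorsThrough P (g + g') := by
  obtain ⟨V, hV, u, v, rfl⟩ := hg
  obtain ⟨V', hV', u', v', rfl⟩ := hg'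
  exact ⟨V ⊞ V', hP.biprod_mem hV hV', biprod.lift u u', biprod.desc v v', biprod.lift_desc ..⟩

theorem factorsThrough_sum (hP : IsAdditiveClass P) {ι : Type*} (s : Finset ι) {K Y : C}
    (g : ι → (K ⟶ Y)) (hg : ∀ i ∈ s, FactorsThrough P (g i)) :
    FactorsThrough P (∑ i ∈ s, g i) :=
  Finset.sum_induction _ _ (fun _ _ => FactorsThrough.add hP)
    ⟨_, hP.zero_mem _ (isZero_zero C), 0, 0, comp_zero⟩ hg

theorem exists_comp_hom₂_add_comp_mor₁ {T T' : Triangle C} (hT : T ∈ distTriang C)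
    (hT' : T' ∈ distTriang C) (φ : T ⟶ T') {K : C} (k : K ⟶ T'.obj₂) (u : K ⟶ T.obj₃)
    (hu : u ≫ φ.hom₃ = k ≫ T'.mor₂) (hu' : u ≫ T.mor₃ = 0) :
    ∃ (l : K ⟶ T.obj₂) (m : K ⟶ T'.obj₁), l ≫ φ.hom₂ + m ≫ T'.mor₁ = k := by
  obtain ⟨l, rfl⟩ := Triangle.coyoneda_exact₃ _ hT u hu'
  obtain ⟨m, hm⟩ := Triangle.coyoneda_exact₂ _ hT' (k - l ≫ φ.hom₂)
    (by rw [Preadditive.sub_comp, ← hu, Category.assoc, Category.assoc, φ.comm₂, sub_self])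
  exact ⟨l, m, by rw [← hm, add_sub_cancel]⟩

theorem factorsThrough_star (hP : IsAdditiveClass P) (hQ : IsAdditiveClass Q) {T : Triangle C}
    (hT : T ∈ distTriang C) {K : C} (k : K ⟶ T.obj₂) {V W : C} (hV : V ∈ P) (hW : W ∈ Q)
    {δ : W ⟶ V⟦(1 : ℤ)⟧} {a : V ⟶ T.obj₁} {c : W ⟶ T.obj₃} (hδ : δ ≫ a⟦(1 : ℤ)⟧' = c ≫ T.mor₃)
    {u : K ⟶ W} (hu : u ≫ c = k ≫ T.mor₂) (hu' : u ≫ δ = 0)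
    (hP₁ : ∀ m : K ⟶ T.obj₁, FactorsThrough P m) : FactorsThrough (P ⋆ Q) k := by
  obtain ⟨Y, f, g, hY⟩ := distinguished_cocone_triangle₂ δ
  obtain ⟨b, hb₁, hb₂⟩ : ∃ b : Y ⟶ T.obj₂, f ≫ b = a ≫ T.mor₁ ∧ g ≫ c = b ≫ T.mor₂ :=
    complete_distinguished_triangle_morphism₂ _ _ hY hT a c hδ
  obtain ⟨l, m, rfl⟩ := exists_comp_hom₂_add_comp_mor₁ hY hT
    (Triangle.homMk _ _ a b c hb₁ hb₂ hδ) k u hu hu'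
  refine .add (hP.star hQ) ⟨Y, mem_star_of_distTriang hY hV hW, l, b, rfl⟩ (.comp_right ?_ _)
  obtain ⟨X, hX, v, w, h⟩ := hP₁ m
  exact ⟨X, subset_star_left hQ.zero_mem hX, v, w, h⟩

/-- A weak form of the octahedral axiom, valid in every pretriangulated category: the cone of
`x ≫ f` receives a morphism from an extension `W` of `Z` by `X₂`, but need not be one. -/
theorem exists_extension_factoring_cone {X₁ X X₂ Y Z N : C} {x : X₁ ⟶ X} {y : X ⟶ X₂}
    {z : X₂ ⟶ X₁⟦(1 : ℤ)⟧} (hX : Triangle.mk x y z ∈ distTriang C) {f : X ⟶ Y} {g : Y ⟶ Z}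
    {h : Z ⟶ X⟦(1 : ℤ)⟧} (hT : Triangle.mk f g h ∈ distTriang C) {p : Y ⟶ N}
    {δ : N ⟶ X₁⟦(1 : ℤ)⟧} (hN : Triangle.mk (x ≫ f) p δ ∈ distTriang C) :
    ∃ (W : C) (u : X₂ ⟶ W) (v : W ⟶ Z), Triangle.mk u v (h ≫ y⟦(1 : ℤ)⟧') ∈ distTriang C ∧
      ∃ (s : Y ⟶ W) (q : W ⟶ N), s ≫ q = p := by
  obtain ⟨W, u, v, hW⟩ := distinguished_cocone_triangle₂ (h ≫ y⟦(1 : ℤ)⟧')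
  obtain ⟨c, hc, -⟩ : ∃ c : X₂ ⟶ N, y ≫ c = f ≫ p ∧ z ≫ (𝟙 X₁)⟦(1 : ℤ)⟧' = c ≫ δ :=
    complete_distinguished_triangle_morphism _ _ hX hN (𝟙 X₁) f
      (show x ≫ f = 𝟙 X₁ ≫ x ≫ f by rw [Category.id_comp])
  obtain ⟨s, hs, hs'⟩ : ∃ s : Y ⟶ W, f ≫ s = y ≫ u ∧ g ≫ 𝟙 Z = s ≫ v :=
    complete_distinguished_triangle_morphism₂ _ _ hT hW y (𝟙 Z)
      (show h ≫ y⟦(1 : ℤ)⟧' = 𝟙 Z ≫ h ≫ y⟦(1 : ℤ)⟧' by rw [Category.id_comp])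
  have h_zero : h ≫ f⟦(1 : ℤ)⟧' = 0 := comp_distTriang_mor_zero₃₁ _ hT
  obtain ⟨q, hq, -⟩ : ∃ q : W ⟶ N, u ≫ q = c ≫ 𝟙 N ∧ v ≫ 0 = q ≫ 0 :=
    complete_distinguished_triangle_morphism₂ _ _ hW (contractible_distinguished N) c 0
      (show (h ≫ y⟦(1 : ℤ)⟧') ≫ c⟦(1 : ℤ)⟧' = 0 ≫ 0 by
        rw [Category.assoc, ← Functor.map_comp, hc, Functor.map_comp, reassoc_of% h_zero,
          zero_comp, zero_comp])
  obtain ⟨w, hw⟩ : ∃ w : Z ⟶ N, p - s ≫ q = g ≫ w := Triangle.yoneda_exact₂ _ hT (p - s ≫ q)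
    (show f ≫ (p - s ≫ q) = 0 by
      rw [Preadditive.comp_sub, reassoc_of% hs, hq, Category.comp_id, hc, sub_self])
  refine ⟨W, u, v, hW, s, q + v ≫ w, ?_⟩
  rw [Preadditive.comp_add, ← Category.assoc s v, ← hs', Category.comp_id, ← hw, add_sub_cancel]

theorem star_star_subset_smd {R : Set C} (hP : IsAdditiveClass P) (hQ : IsAdditiveClass Q)
    (hR : IsAdditiveClass R) : (P ⋆ Q) ⋆ R ⊆ smd C (P ⋆ (Q ⋆ R)) := by
  rintro Y ⟨X, Z, f, g, h, hT, ⟨X₁, X₂, x, y, z, hX, hX₁, hX₂⟩, hZ⟩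
  obtain ⟨N, p, δ, hN⟩ := distinguished_cocone_triangle (x ≫ f)
  obtain ⟨W, u, v, hW, s, q, hsq⟩ := exists_extension_factoring_cone hX hT hN
  have hpδ : p ≫ δ = 0 := comp_distTriang_mor_zero₂₃ _ hN
  exact factorsThrough_star hP (hQ.star hR) hN (𝟙 Y) hX₁ (mem_star_of_distTriang hW hX₂ hZ)
    (show (q ≫ δ) ≫ (𝟙 X₁)⟦(1 : ℤ)⟧' = q ≫ δ by simp)
    (show s ≫ q = 𝟙 Y ≫ p by rw [hsq, Category.id_comp])
    (show s ≫ q ≫ δ = 0 by rw [reassoc_of% hsq, hpδ])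
    fun m => ⟨X₁, hX₁, m, 𝟙 X₁, Category.comp_id m⟩

end FactorsThrough

section CompactFactorization

variable {C} {P Q : Set C} {G : ℤ → Set C}

omit [HasCoproducts.{v} C] in
theorem id_sigma_eq_sum {ι : Type v} [Fintype ι] [DecidableEq ι] (f : ι → C) :
    𝟙 (∐ f) = ∑ i : ι, Sigma.π f i ≫ Sigma.ι f i := by
  refine Sigma.hom_ext _ _ fun j => ?_
  rw [Category.comp_id, Preadditive.comp_sum,
    Finset.sum_eq_single j (fun i _ hij => by rw [Sigma.ι_π_of_ne_assoc _ hij.symm, zero_comp])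
      fun h => absurd (Finset.mem_univ j) h, Sigma.ι_π_eq_id_assoc]

omit [HasCoproducts.{v} C] in
theorem factorsThrough_of_sigma_π (hP : IsAdditiveClass P) {ι : Type v} [Finite ι]
    [DecidableEq ι] {f : ι → C} {K : C} {g : K ⟶ ∐ f}
    (hg : ∀ i, FactorsThrough P (g ≫ Sigma.π f i)) : FactorsThrough P g := by
  have := Fintype.ofFinite ι
  rw [← Category.comp_id g, id_sigma_eq_sum f, Preadditive.comp_sum]
  refine factorsThrough_sum hP _ _ fun i _ => ?_
  rw [← Category.assoc]
  exact (hg i).comp_right _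

/-- The class of objects `Y` such that every morphism from a compact object to `Y` factors
through an object of `P`. -/
def compactFac (P : Set C) : Set C :=
  {Y | ∀ K ∈ compacts C, ∀ g : K ⟶ Y, FactorsThrough P g}

theorem subset_compactFac (P : Set C) : P ⊆ compactFac P :=
  fun Y hY _ _ g => ⟨Y, hY, g, 𝟙 Y, Category.comp_id g⟩

theorem compactFac_mono (h : P ⊆ Q) : compactFac P ⊆ compactFac Q := fun _ hY K hK g =>
  let ⟨V, hV, u, v, w⟩ := hY K hK g
  ⟨V, h hV, u, v, w⟩

theorem smd_compactFac_subset (P : Set C) : smd C (compactFac P) ⊆ compactFac P := by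
  rintro X ⟨Y, hY, i, r, w⟩ K hK g
  have hg := (hY K hK (g ≫ i)).comp_right r
  rwa [Category.assoc, w, Category.comp_id] at hg

theorem mem_compactFac_of_iso {X Y : C} (e : X ≅ Y) (hX : X ∈ compactFac P) : Y ∈ compactFac P :=
  smd_compactFac_subset P ⟨X, hX, e.inv, e.hom, e.inv_hom_id⟩

theorem compacts_inter_compactFac_subset (P : Set C) : compacts C ∩ compactFac P ⊆ smd C P :=
  fun K hK => mem_smd_iff_factorsThrough_id.2 (hK.2 K hK.1 (𝟙 K))

theorem sigma_mem_compactFac (hP : IsAdditiveClass P) {α : Type v} {f : α → C}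
    (hf : ∀ i, f i ∈ compactFac P) : (∐ f) ∈ compactFac P := by
  classical
  intro K hK g
  obtain ⟨s, h, rfl⟩ := hK α f g
  have hh : FactorsThrough P h := factorsThrough_of_sigma_π hP fun i => hf i.1 K hK _
  exact hh.comp_right _

theorem star_compactFac_subset (hG : IsGenSeq C G) (hP : IsAdditiveClass P)
    (hQ : IsAdditiveClass Q) (hQc : Q ⊆ compacts C) :
    compactFac P ⋆ compactFac Q ⊆ compactFac (P ⋆ Q) := by
  rintro Y ⟨X, Z, f, g, h, hT, hX, hZ⟩ K hK k
  obtain ⟨W, hW, u, v, huv⟩ := hZ K hK (k ≫ g)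
  obtain ⟨N, p, q, hN⟩ := distinguished_cocone_triangle₁ u
  have hNc : N ∈ compacts C := hG.isExtGoodMetric_compacts.star_subset 0
    (mem_star_of_distTriang (inv_rot_of_distTriang _ hN)
      (hG.isExtGoodMetric_compacts.shift_mem (i := |(-1 : ℤ)|) (j := 0) (by simp) (hQc hW)) hK)
  obtain ⟨a, -, ha⟩ : ∃ a : N ⟶ X, p ≫ k = a ≫ f ∧ q ≫ a⟦(1 : ℤ)⟧' = v ≫ h :=
    complete_distinguished_triangle_morphism₁ _ _ hN hT k v huv
  obtain ⟨V, hV, a₁, a₂, rfl⟩ := hX N hNc a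
  have huq : u ≫ q = 0 := comp_distTriang_mor_zero₂₃ _ hN
  exact factorsThrough_star hP hQ hT k hV hW
    (show (q ≫ a₁⟦(1 : ℤ)⟧') ≫ a₂⟦(1 : ℤ)⟧' = v ≫ h by
      rw [Category.assoc, ← Functor.map_comp, ha])
    huv (show u ≫ q ≫ a₁⟦(1 : ℤ)⟧' = 0 by rw [reassoc_of% huq, zero_comp])
    (hX K hK)

theorem bigClosure_subset_compactFac (hG : IsGenSeq C G) {U : Set C}
    (hU : smdCoprod U ⊆ compacts C) : {X | bigClosure C U X} ⊆ compactFac (smdCoprod U) := by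
  intro X hX
  change bigClosure C U X at hX
  have hU_add := isAdditiveClass_smdCoprod U
  induction hX with
  | of h => exact subset_compactFac _ (subset_smdCoprod U h)
  | zero h => exact subset_compactFac _ (mem_smdCoprod_of_isZero U _ h)
  | coprod f _ e ih => exact mem_compactFac_of_iso e.symm (sigma_mem_compactFac hU_add ih)
  | ext f g h hT _ _ hX hZ =>
    exact compactFac_mono (star_smdCoprod_subset U)
      (star_compactFac_subset hG hU_add hU_add hU ⟨_, _, f, g, h, hT, hX, hZ⟩)
  | retract i r w _ ih => exact smd_compactFac_subset _ ⟨_, ih, i, r, w⟩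

end CompactFactorization

section IterStar

variable {C} {P : ℤ → Set C}

/-- The `m`-fold star `P j ⋆ P (j + 1) ⋆ ⋯ ⋆ P (j + m - 1)`, bracketed to the right. -/
def iterStar (P : ℤ → Set C) : ℕ → ℤ → Set C
  | 0, _ => {X | IsZero X}
  | m + 1, j => P j ⋆ iterStar P m (j + 1)

omit [HasCoproducts.{v} C] in
theorem isAdditiveClass_iterStar (hP : ∀ j, IsAdditiveClass (P j)) (m : ℕ) (j : ℤ) :
    IsAdditiveClass (iterStar P m j) := by
  induction m generalizing j with
  | zero => exact isAdditiveClass_isZero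
  | succ m ih => exact (hP j).star (ih (j + 1))

theorem iterStar_subset_compacts {G : ℤ → Set C} (hG : IsGenSeq C G)
    (hP : ∀ j, P j ⊆ compacts C) (m : ℕ) (j : ℤ) : iterStar P m j ⊆ compacts C := by
  induction m generalizing j with
  | zero => exact hG.isExtGoodMetric_compacts.zero_mem 0
  | succ m ih =>
    exact (star_mono (hP j) (ih (j + 1))).trans (hG.isExtGoodMetric_compacts.star_subset 0)

theorem iterStar_compactFac_subset {G : ℤ → Set C} (hG : IsGenSeq C G)
    (hP : ∀ j, IsAdditiveClass (P j)) (hPc : ∀ j, P j ⊆ compacts C) (m : ℕ) (j : ℤ) :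
    iterStar (fun j => compactFac (P j)) m j ⊆ compactFac (iterStar P m j) := by
  induction m generalizing j with
  | zero => exact subset_compactFac _
  | succ m ih =>
    exact (star_mono subset_rfl (ih (j + 1))).trans
      (star_compactFac_subset hG (hP j) (isAdditiveClass_iterStar hP m (j + 1))
        (iterStar_subset_compacts hG hPc m (j + 1)))

omit [HasCoproducts.{v} C] in
theorem subset_iterStar_star {R T : ℤ → Set C} (hR : ∀ n, lOrth C (rOrth C (R n)) = R n)
    (hT : ∀ j, T j ⊆ R j) (h : ∀ j, T j ⊆ P j ⋆ T (j + 1)) (m : ℕ) (j : ℤ) :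
    T j ⊆ iterStar P m j ⋆ R (j + m) := by
  induction m generalizing j with
  | zero =>
    refine (hT j).trans ?_
    rw [Nat.cast_zero, add_zero]
    exact subset_star_right fun _ hZ => hZ
  | succ m ih =>
    have hj : j + 1 + m = j + (m + 1 : ℕ) := by push_cast; ring
    exact ((h j).trans (star_mono subset_rfl (ih (j + 1)))).trans
      (hj ▸ star_star_subset (hR (j + 1 + m)))

theorem mem_smd_iterStar {G R T : ℤ → Set C} (hG : IsGenSeq C G)
    (hR : ∀ n, lOrth C (rOrth C (R n)) = R n) (hP : ∀ j, IsAdditiveClass (P j))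
    (hPc : ∀ j, P j ⊆ compacts C) (hT : ∀ j, T j ⊆ R j)
    (h : ∀ j, T j ⊆ compactFac (P j) ⋆ T (j + 1)) {m : ℕ} {j : ℤ} {K : C}
    (hK : K ∈ compacts C) (hKT : K ∈ T j) (hKR : K ∈ lOrth C (R (j + m))) :
    K ∈ smd C (iterStar P m j) := by
  have hK_star : K ∈ iterStar (fun j => compactFac (P j)) m j ⋆ R (j + m) :=
    subset_iterStar_star hR hT h m j hKT
  refine compacts_inter_compactFac_subset _ ⟨hK, smd_compactFac_subset _ ?_⟩
  exact smd_mono (iterStar_compactFac_subset hG hP hPc m j)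
    (mem_smd_of_mem_star_of_hom_eq_zero hK_star hKR)

end IterStar

section Approximability

variable {C} {G Rm : ℤ → Set C} {A : ℤ} {T : Set C}

/-- The common part of weak `G`-approximability (`T = Set.univ`) and weak
`G`-quasiapproximability (`T = closCompacts C Rm`): the approximation condition is imposed on the
objects of a class `T` containing the compact objects. -/
structure IsWeakGApproxOn (G Rm : ℤ → Set C) (A : ℤ) (T : Set C) : Prop
    extends IsGPreApprox C G Rm A where
  compacts_subset : compacts C ⊆ T
  hom_vanish : ∀ n i : ℤ, A ≤ n + i → homZero C (G n) (Rm i)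
  subset_star : ∀ i : ℤ, Rm i ∩ T ⊆ gBarInt C G (-A - i) (A - i) ⋆ (Rm (i + 1) ∩ T)

/-- The common part of `G`-approximability and `G`-quasiapproximability, as in
`IsWeakGApproxOn`. -/
structure IsGApproxOn (G Rm : ℤ → Set C) (A : ℤ) (T : Set C) : Prop
    extends IsWeakGApproxOn G Rm A T where
  subset_star_pow : ∀ i : ℤ,
    Rm i ∩ T ⊆ gBarIntPow C G (-A - i) (A - i) A ⋆ (Rm (i + 1) ∩ T)

theorem IsWeakGApprox.isWeakGApproxOn (h : IsWeakGApprox C G Rm A) :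
    IsWeakGApproxOn G Rm A Set.univ where
  toIsGPreApprox := h.toIsGPreApprox
  compacts_subset := Set.subset_univ _
  hom_vanish := h.hom_vanish
  subset_star i F hF := (Set.inter_univ (Rm (i + 1))).symm ▸ h.approx i F hF.1

theorem IsGApprox.isGApproxOn (h : IsGApprox C G Rm A) : IsGApproxOn G Rm A Set.univ where
  toIsWeakGApproxOn := h.toIsWeakGApprox.isWeakGApproxOn
  subset_star_pow i F hF := (Set.inter_univ (Rm (i + 1))).symm ▸ h.approx' i F hF.1

theorem IsWeakGQuasiApprox.isWeakGApproxOn (h : IsWeakGQuasiApprox C G Rm A) :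
    IsWeakGApproxOn G Rm A (closCompacts C Rm) where
  toIsGPreApprox := h.toIsGPreApprox
  compacts_subset := Set.subset_iInter fun n => subset_star_left (h.orthMetric.zero_mem n)
  hom_vanish := h.hom_vanish
  subset_star := h.approx

theorem IsGQuasiApprox.isGApproxOn (h : IsGQuasiApprox C G Rm A) :
    IsGApproxOn G Rm A (closCompacts C Rm) where
  toIsWeakGApproxOn := h.toIsWeakGQuasiApprox.isWeakGApproxOn
  subset_star_pow := h.approx'

theorem IsGPreApprox.MG_subset (h : IsGPreApprox C G Rm A) {i j : ℤ} (hij : i + A ≤ j) :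
    MG C G j ⊆ Rm i := fun X hX =>
  h.orthMetric.subset_of_le (show i ≤ j - A by omega)
    (h.cond1 (j - A) (by rwa [sub_add_cancel])).1

end Approximability

section UniformApprox

variable {C} {G Rm : ℤ → Set C} {A : ℤ} {T : Set C}

section

omit [HasCoproducts.{v} C]

/-- The class of objects `V` admitting, for every `n`, an approximation modulo `R_n` by an object
of `G^{[-c-n,b]}`. -/
def uniformApprox (G Rm : ℤ → Set C) (c b : ℤ) : Set C :=
  {V | ∀ n : ℤ, V ∈ gInt C G (-c - n) b ⋆ Rm n}

theorem uniformApprox_mono {c b c' b' : ℤ} (hc : c ≤ c') (hb : b ≤ b') :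
    uniformApprox G Rm c b ⊆ uniformApprox G Rm c' b' :=
  fun _ h n => star_mono (gInt_mono (by omega) hb) subset_rfl (h n)

theorem mem_uniformApprox_of_iso {c b : ℤ} {V V' : C} (e : V ≅ V')
    (h : V ∈ uniformApprox G Rm c b) : V' ∈ uniformApprox G Rm c b :=
  fun n => mem_star_of_iso e (h n)

theorem gInt_star_gInt_subset {a b a₁ b₁ a₂ b₂ : ℤ} (ha₁ : a ≤ a₁) (hb₁ : b₁ ≤ b) (ha₂ : a ≤ a₂)
    (hb₂ : b₂ ≤ b) : gInt C G a₁ b₁ ⋆ gInt C G a₂ b₂ ⊆ gInt C G a b :=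
  (star_mono (gInt_mono ha₁ hb₁) (gInt_mono ha₂ hb₂)).trans (star_smdCoprod_subset _)

theorem iterStar_gInt_subset_gIic (m : ℕ) (j : ℤ) :
    iterStar (fun j => gInt C G (-A - j) (A - j)) m j ⊆ gIic C G (A - j) := by
  induction m generalizing j with
  | zero => exact mem_smdCoprod_of_isZero _
  | succ m ih =>
    refine (star_mono (gInt_subset_gIic le_rfl) ?_).trans (star_smdCoprod_subset _)
    exact (ih (j + 1)).trans
      (smdCoprod_mono (Set.biUnion_subset_biUnion_left (Set.Iic_subset_Iic.2 (by omega))))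

end

theorem iterStar_gInt_subset_uniformApprox (h : IsGPreApprox C G Rm A) (m : ℕ) (j : ℤ) :
    iterStar (fun j => gInt C G (-A - j) (A - j)) m j ⊆ uniformApprox G Rm (3 * A) (A - j) := by
  have h_zero : ∀ j n, Rm n ⊆ gInt C G (-(3 * A) - n) (A - j) ⋆ Rm n := fun _ _ =>
    subset_star_right (mem_smdCoprod_of_isZero _)
  induction m generalizing j with
  | zero => exact fun X hX n => h_zero j n (h.orthMetric.zero_mem n X hX)
  | succ m ih =>
    intro X hX n
    rcases lt_or_ge n (j - 2 * A) with hn | hn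
    · have hXM : X ∈ MG C G (j - A) := by
        simpa only [MG, neg_sub] using iterStar_gInt_subset_gIic (m + 1) j hX
      exact h_zero j n (h.MG_subset (by omega) hXM)
    · have hX_star := star_star_subset (h.orthMetric.orth n)
        (star_mono subset_rfl (fun Y hY => ih (j + 1) hY n) hX)
      exact star_mono (gInt_star_gInt_subset (by omega) le_rfl le_rfl (by omega)) subset_rfl hX_star

theorem IsWeakGApproxOn.mem_smd_gIic_inter_uniformApprox (h : IsWeakGApproxOn G Rm A T)
    (hG : IsGenSeq C G) {i : ℤ} {K : C} (hK : K ∈ compacts C ∩ Rm i) :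
    K ∈ smd C (gIic C G (A - i) ∩ uniformApprox G Rm (3 * A) (A - i)) := by
  obtain ⟨N, hN⟩ := hG.exists_mem_lOrth h.orthMetric.toIsExtGoodMetric h.cond2 hK.1
  obtain ⟨m, hm⟩ : ∃ m : ℕ, N ≤ i + m := ⟨(N - i).toNat, by omega⟩
  have hKN : K ∈ lOrth C (Rm (i + m)) := fun W hW =>
    hN W (h.orthMetric.subset_of_le hm hW)
  refine smd_mono (Set.subset_inter (iterStar_gInt_subset_gIic m i)
    (iterStar_gInt_subset_uniformApprox h.toIsGPreApprox m i)) ?_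
  exact mem_smd_iterStar (T := fun j => Rm j ∩ T) hG h.orthMetric.orth
    (fun j => isAdditiveClass_smdCoprod _) (fun j => hG.gInt_subset_compacts _ _)
    (fun j => Set.inter_subset_left)
    (fun j => (h.subset_star j).trans (star_mono
      (bigClosure_subset_compactFac hG (hG.gInt_subset_compacts _ _)) subset_rfl))
    hK.1 ⟨hK.2, h.compacts_subset hK.1⟩ hKN

theorem IsWeakGApproxOn.obj₃_mem_uniformApprox (h : IsWeakGApproxOn G Rm A T) (hG : IsGenSeq C G)
    {c b : ℤ} (hc : 0 ≤ c) {X : Triangle C} (hX : X ∈ distTriang C)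
    (h₁ : X.obj₁ ∈ uniformApprox G Rm c b) (h₂ : X.obj₂ ∈ uniformApprox G Rm c b) :
    X.obj₃ ∈ uniformApprox G Rm (2 * c + A + 2) (b + 1) := by
  have hA := h.A_pos
  intro n
  have h₃ := obj₃_mem_star (h.orthMetric.orth n) hX (h₁ (n + 1)) (h₂ (n + 1 + c + A))
    (gInt_subset_lOrth fun m hm => h.hom_vanish m _ (by omega))
    (h.orthMetric.shift_one n) (h.orthMetric.subset_of_le (by omega))
  exact star_mono ((star_mono subset_rfl (hG.shift_one_gInt_subset _ _)).trans
    (gInt_star_gInt_subset (by omega) (by omega) (by omega) le_rfl)) subset_rfl h₃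

omit [HasCoproducts.{v} C] in
theorem exists_distTriang_biprod_swap (X Y Z : C) :
    ∃ (f : Y ⊞ Z ⟶ X ⊞ Y) (g : X ⊞ Y ⟶ X ⊞ Z⟦(1 : ℤ)⟧) (h : X ⊞ Z⟦(1 : ℤ)⟧ ⟶ (Y ⊞ Z)⟦(1 : ℤ)⟧),
      Triangle.mk f g h ∈ distTriang C := by
  have h0 := isZero_zero C
  obtain ⟨f, g, h, hYZ⟩ := exists_distTriang_biprod (contractible_distinguished Y)
    (rot_of_distTriang _ (contractible_distinguished Z))
  obtain ⟨f', g', h', hXYZ⟩ := exists_distTriang_biprod (contractible_distinguished₁ X) hYZ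
  exact exists_distTriang_of_iso hXYZ (isoZeroBiprod h0).symm
    (biprod.mapIso (Iso.refl X) (isoBiprodZero h0).symm)
    (biprod.mapIso (Iso.refl X) (isoZeroBiprod h0).symm)

theorem IsWeakGApproxOn.biprod_shift_mem_uniformApprox (h : IsWeakGApproxOn G Rm A T)
    (hG : IsGenSeq C G) {c b : ℤ} (hc : 0 ≤ c) {X Y Z : C}
    (hXY : (X ⊞ Y) ∈ uniformApprox G Rm c b) (hYZ : (Y ⊞ Z) ∈ uniformApprox G Rm c b) :
    (X ⊞ Z⟦(1 : ℤ)⟧) ∈ uniformApprox G Rm (2 * c + A + 2) (b + 1) := by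
  obtain ⟨f, g, k, hT⟩ := exists_distTriang_biprod_swap X Y Z
  exact h.obj₃_mem_uniformApprox hG hc hT hYZ hXY

end UniformApprox

section ShiftSum

variable {C} {G Rm : ℤ → Set C} {A : ℤ} {T : Set C}

/-- The objects `K ⊞ ΣˢK`, for `K` compact in `R_i`, belong to `uniformApprox G Rm c (c - i)` with
a bound `c` independent of `i` and `K`. -/
def IsUniformShiftSum (G Rm : ℤ → Set C) (s : ℤ) : Prop :=
  ∃ c : ℤ, 0 ≤ c ∧ ∀ i : ℤ, ∀ K ∈ compacts C ∩ Rm i, (K ⊞ K⟦s⟧) ∈ uniformApprox G Rm c (c - i)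

theorem IsWeakGApproxOn.shift_mem_compacts_inter (h : IsWeakGApproxOn G Rm A T)
    (hG : IsGenSeq C G) {i : ℤ} {K : C} (hK : K ∈ compacts C ∩ Rm i) (s : ℤ) :
    K⟦s⟧ ∈ compacts C ∩ Rm (i - |s|) :=
  ⟨hG.isExtGoodMetric_compacts.shift_mem (i := |s|) (j := 0) (by omega) hK.1,
    h.orthMetric.shift_mem (by omega) hK.2⟩

theorem IsWeakGApproxOn.isUniformShiftSum_one (h : IsWeakGApproxOn G Rm A T) (hG : IsGenSeq C G) :
    IsUniformShiftSum G Rm 1 := by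
  have hA := h.A_pos
  refine ⟨2 * (3 * A) + A + 2, by omega, fun i K hK => ?_⟩
  obtain ⟨V, ⟨-, hV⟩, X, ⟨e⟩⟩ :=
    exists_iso_biprod_of_mem_smd (h.mem_smd_gIic_inter_uniformApprox hG hK)
  exact uniformApprox_mono le_rfl (by omega) (h.biprod_shift_mem_uniformApprox hG (by omega)
    (mem_uniformApprox_of_iso e hV) (mem_uniformApprox_of_iso (e ≪≫ biprod.braiding _ _) hV))

theorem IsUniformShiftSum.add_add_one (h : IsWeakGApproxOn G Rm A T) (hG : IsGenSeq C G) {s t : ℤ}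
    (hs : IsUniformShiftSum G Rm s) (ht : IsUniformShiftSum G Rm t) :
    IsUniformShiftSum G Rm (s + t + 1) := by
  have hA := h.A_pos
  obtain ⟨c, hc, hs⟩ := hs
  obtain ⟨d, hd, ht⟩ := ht
  have hs_nonneg := abs_nonneg s
  refine ⟨2 * (c + d + |s|) + A + 2, by omega, fun i K hK => ?_⟩
  have hK_s : (K ⊞ K⟦s⟧) ∈ uniformApprox G Rm (c + d + |s|) (c + d + |s| - i) :=
    uniformApprox_mono (by omega) (by omega) (hs i K hK)
  have hK_t : (K⟦s⟧ ⊞ K⟦s⟧⟦t⟧) ∈ uniformApprox G Rm (c + d + |s|) (c + d + |s| - i) :=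
    uniformApprox_mono (by omega) (by omega) (ht _ _ (h.shift_mem_compacts_inter hG hK s))
  let e : K⟦s⟧⟦t⟧⟦(1 : ℤ)⟧ ≅ K⟦s + t + 1⟧ :=
    (shiftFunctor C 1).mapIso ((shiftFunctorAdd C s t).app K).symm ≪≫
      ((shiftFunctorAdd C (s + t) 1).app K).symm
  exact mem_uniformApprox_of_iso (biprod.mapIso (Iso.refl K) e) (uniformApprox_mono le_rfl
    (by omega) (h.biprod_shift_mem_uniformApprox hG (by omega) hK_s hK_t))

theorem IsUniformShiftSum.neg (h : IsWeakGApproxOn G Rm A T) (hG : IsGenSeq C G) {s : ℤ}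
    (hs : IsUniformShiftSum G Rm s) : IsUniformShiftSum G Rm (-s) := by
  obtain ⟨c, hc, hs⟩ := hs
  have hs_nonneg := abs_nonneg s
  refine ⟨c + |s|, by omega, fun i K hK => ?_⟩
  have hK_neg := hs _ _ (h.shift_mem_compacts_inter hG hK (-s))
  rw [abs_neg] at hK_neg
  let e : K⟦-s⟧ ⊞ K⟦-s⟧⟦s⟧ ≅ K ⊞ K⟦-s⟧ := biprod.braiding _ _ ≪≫
    biprod.mapIso ((shiftFunctorCompIsoId C (-s) s (neg_add_cancel s)).app K) (Iso.refl _)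
  exact mem_uniformApprox_of_iso e (uniformApprox_mono (by omega) (by omega) hK_neg)

theorem IsWeakGApproxOn.isUniformShiftSum_odd (h : IsWeakGApproxOn G Rm A T) (hG : IsGenSeq C G)
    (k : ℤ) : IsUniformShiftSum G Rm (2 * k + 1) := by
  have h_one := h.isUniformShiftSum_one hG
  have h_three : IsUniformShiftSum G Rm 3 := h_one.add_add_one h hG h_one
  induction k using Int.induction_on with
  | zero => exact h_one
  | succ k ih =>
    convert ih.add_add_one h hG h_one using 1
    ring
  | pred k ih =>
    convert ih.add_add_one h hG (h_three.neg h hG) using 1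
    ring

theorem IsWeakGApproxOn.exists_forall_biprod_mem_uniformApprox (h : IsWeakGApproxOn G Rm A T)
    (hG : IsGenSeq C G) (N : ℤ) : ∃ c : ℤ, 0 ≤ c ∧ ∀ k : ℤ, |k| ≤ N → ∀ i : ℤ,
      ∀ K ∈ compacts C ∩ Rm i, (K ⊞ K⟦2 * k + 1⟧) ∈ uniformApprox G Rm c (c - i) := by
  choose c hc_nonneg hc using h.isUniformShiftSum_odd hG
  refine ⟨∑ k ∈ Finset.Icc (-N) N, c k, Finset.sum_nonneg fun k _ => hc_nonneg k,
    fun k hk i K hK => ?_⟩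
  have hck : c k ≤ ∑ k ∈ Finset.Icc (-N) N, c k :=
    Finset.single_le_sum (fun k _ => hc_nonneg k) (Finset.mem_Icc.2 (abs_le.1 hk))
  exact uniformApprox_mono hck (by omega) (hc k i K hK)

theorem IsGPreApprox.exists_iso_shift (h : IsGPreApprox C G Rm A) (t : ℕ) {i : ℤ} {K : C}
    (hK : K ∈ MG C G i) :
    ∃ n : ℤ, |n| ≤ A * t ∧ ∃ K' ∈ MG C G (i + t), Nonempty (K ≅ K'⟦n⟧) := by
  induction t generalizing i K with
  | zero =>
    exact ⟨0, by simp, K, by simpa using hK, ⟨((shiftFunctorZero C ℤ).app K).symm⟩⟩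
  | succ t ih =>
    obtain ⟨n, hn, K₁, hK₁, ⟨e₁⟩⟩ := Set.mem_iUnion₂.1 (h.cond0 i hK)
    obtain ⟨m, hm, K₂, hK₂, ⟨e₂⟩⟩ := ih hK₁
    have hn : |n| ≤ A := hn
    refine ⟨m + n, ?_, K₂, ?_,
      ⟨e₁ ≪≫ (shiftFunctor C n).mapIso e₂ ≪≫ ((shiftFunctorAdd C m n).app K₂).symm⟩⟩
    · calc |m + n| ≤ |m| + |n| := abs_add_le m n
        _ ≤ A * t + A := add_le_add hm hn
        _ = A * (t + 1 : ℕ) := by push_cast; ring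
    · convert hK₂ using 2
      push_cast
      ring

/-- Condition (0) bounds the number of shifts needed to move `K` deep into the metric; one further
shift makes this number odd. -/
theorem IsWeakGApproxOn.exists_odd_shift_mem (h : IsWeakGApproxOn G Rm A T) (hG : IsGenSeq C G)
    (m : ℕ) : ∃ N : ℤ, ∀ i : ℤ, ∀ K ∈ compacts C ∩ Rm i,
      ∃ k : ℤ, |k| ≤ N ∧ K⟦2 * k + 1⟧ ∈ Rm (i + m) := by
  have hA := h.A_pos
  let t := 2 * A.toNat + m + 1
  refine ⟨A * t + 1, fun i K hK => ?_⟩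
  have hKM : K ∈ MG C G (i - A) := by
    obtain ⟨V, ⟨hV, -⟩, p, r, w⟩ := h.mem_smd_gIic_inter_uniformApprox hG hK
    have hK_gIic : K ∈ gIic C G (A - i) := mem_smd_of_retract hV p r w
    simpa only [MG, neg_sub] using hK_gIic
  obtain ⟨n, hn, K', hK', ⟨e⟩⟩ := h.exists_iso_shift t hKM
  have hK'R : K' ∈ Rm (i + m + 1) := h.MG_subset (by omega) hK'
  have hKn : K⟦-n⟧ ∈ Rm (i + m + 1) := h.orthMetric.iso_closed _
    ((shiftFunctor C (-n)).mapIso e ≪≫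
      (shiftFunctorCompIsoId C n (-n) (add_neg_cancel n)).app K').symm hK'R
  have hn_bounds := abs_le.1 hn
  obtain ⟨k, hk | hk⟩ := Int.even_or_odd' (-n)
  · refine ⟨k, abs_le.2 (by omega), h.orthMetric.shift_one _ ⟨_, hKn, ⟨?_⟩⟩⟩
    exact (shiftFunctorAdd' C (-n) 1 (2 * k + 1) (by rw [hk])).app K
  · exact ⟨k, abs_le.2 (by omega), hk ▸ h.orthMetric.antitone _ hKn⟩

theorem IsWeakGApproxOn.exists_subset_gInt_star (h : IsWeakGApproxOn G Rm A T)
    (hG : IsGenSeq C G) : ∃ B : ℤ, 0 < B ∧ ∀ i : ℤ,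
      compacts C ∩ Rm i ⊆ gInt C G (-B - i) (B - i) ⋆ Rm (i + 1) := by
  obtain ⟨N, hN⟩ := h.exists_odd_shift_mem hG 2
  obtain ⟨c, hc, hK_sum⟩ := h.exists_forall_biprod_mem_uniformApprox hG N
  refine ⟨c + 1, by omega, fun i K hK => ?_⟩
  obtain ⟨k, hk, hKk⟩ := hN i K hK
  have hK_star := mem_star_of_biprod_mem_star (h.orthMetric.orth (i + 1))
    (hK_sum k hk i K hK (i + 1))
    (h.orthMetric.shift_one (i + 1) ⟨_, by simpa [add_assoc] using hKk, ⟨Iso.refl _⟩⟩)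
  exact star_mono (gInt_mono (by omega) (by omega)) subset_rfl hK_star

end ShiftSum

section CoprodPow

variable {C}
omit [HasCoproducts.{v} C]
variable {U V : Set C}

theorem mem_addClosure_of_iso_sigma {ι : Type v} [Finite ι] {f : ι → C} (hf : ∀ i, f i ∈ U)
    {X : C} (e : X ≅ ∐ f) : X ∈ addClosure C U := by
  let ε : ULift.{v} (Fin (Nat.card ι)) ≃ ι := Equiv.ulift.trans (Finite.equivFin ι).symm
  exact ⟨Nat.card ι, f ∘ ε, fun i => hf _, ⟨e ≪≫ (Sigma.reindex ε f).symm⟩⟩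

theorem subset_addClosure (U : Set C) : U ⊆ addClosure C U := fun X hX =>
  mem_addClosure_of_iso_sigma (f := fun _ : PUnit.{v + 1} => X) (fun _ => hX)
    (coproductUniqueIso fun _ : PUnit.{v + 1} => X).symm

theorem addClosure_mono (h : U ⊆ V) : addClosure C U ⊆ addClosure C V :=
  fun _ ⟨n, f, hf, e⟩ => ⟨n, f, fun i => h (hf i), e⟩

theorem isAdditiveClass_addClosure (U : Set C) : IsAdditiveClass (addClosure C U) where
  zero_mem X hX := by
    have h_empty : IsZero (∐ (PEmpty.elim : PEmpty.{v + 1} → C)) :=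
      (IsZero.iff_id_eq_zero _).2 (Sigma.hom_ext _ _ fun i => i.elim)
    exact mem_addClosure_of_iso_sigma (fun i => i.elim) (hX.iso h_empty)
  biprod_mem := by
    rintro X Y ⟨m, f, hf, ⟨e⟩⟩ ⟨n, g, hg, ⟨e'⟩⟩
    have e_sum : (∐ f) ⊞ (∐ g) ≅ ∐ Sum.elim f g :=
      (Cofan.combPairIsColimit (coproductIsCoproduct f) (coproductIsCoproduct g)
        (BinaryBiproduct.isColimit (∐ f) (∐ g))).coconePointUniqueUpToIso
          (coproductIsCoproduct (Sum.elim f g))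
    exact mem_addClosure_of_iso_sigma (Sum.forall.2 ⟨hf, hg⟩) (biprod.mapIso e e' ≪≫ e_sum)

theorem addClosure_subset_smdCoprod (U : Set C) : addClosure C U ⊆ smdCoprod U := by
  rintro X ⟨n, f, hf, ⟨e⟩⟩
  have h_sigma : (∐ f) ∈ smd C (smdCoprod U) := mem_smd_iff_factorsThrough_id.2
    (factorsThrough_of_sigma_π (isAdditiveClass_smdCoprod U) fun i =>
      ⟨f i, subset_smdCoprod U (hf i), _, 𝟙 _, Category.comp_id _⟩)
  exact mem_smd_of_iso e.symm (smd_subset_smd_iff.2 subset_rfl h_sigma)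

theorem coprodPow_mono (h : U ⊆ V) (n : ℕ) : coprodPow C U n ⊆ coprodPow C V n := by
  induction n with
  | zero => exact subset_rfl
  | succ n ih => exact star_mono (addClosure_mono h) ih

theorem coprodPow_mono_right (U : Set C) : Monotone (coprodPow C U) :=
  monotone_nat_of_le_succ fun _ => subset_star_right (isAdditiveClass_addClosure U).zero_mem

theorem isAdditiveClass_coprodPow (U : Set C) (n : ℕ) : IsAdditiveClass (coprodPow C U n) := by
  induction n with
  | zero => exact isAdditiveClass_isZero
  | succ n ih => exact (isAdditiveClass_addClosure U).star ih

theorem coprodPow_subset_smdCoprod (U : Set C) (n : ℕ) : coprodPow C U n ⊆ smdCoprod U := by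
  induction n with
  | zero => exact mem_smdCoprod_of_isZero U
  | succ n ih =>
    exact (star_mono (addClosure_subset_smdCoprod U) ih).trans (star_smdCoprod_subset U)

theorem coprodPow_star_coprodPow_subset (U : Set C) (a b : ℕ) :
    coprodPow C U a ⋆ coprodPow C U b ⊆ smd C (coprodPow C U (a + b)) := by
  induction a with
  | zero =>
    rintro Y ⟨X, Z, f, g, h, hT, hX, hZ⟩
    have hX : IsZero X := hX
    obtain ⟨l, hl⟩ : ∃ l : Z ⟶ Y, 𝟙 Y = g ≫ l :=
      Triangle.yoneda_exact₂ _ hT (𝟙 Y) (hX.eq_of_src _ _)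
    rw [Nat.zero_add]
    exact mem_smd_of_retract (subset_smd _ hZ) g l hl.symm
  | succ a ih =>
    refine (star_star_subset_smd (isAdditiveClass_addClosure U) (isAdditiveClass_coprodPow U a)
      (isAdditiveClass_coprodPow U b)).trans (smd_subset_smd_iff.2 ?_)
    rw [Nat.add_right_comm]
    exact (star_mono (subset_smd _) ih).trans star_smd_subset

variable {G : ℤ → Set C}

theorem iterStar_coprodPow_subset {A j a b : ℤ} {k m : ℕ} (ha : a + m ≤ -A - j + 1)
    (hb : A - j ≤ b) :
    iterStar (fun j => coprodPow C (unionIcc C G (-A - j) (A - j)) k) m j ⊆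
      smd C (coprodPow C (unionIcc C G a b) (m * k)) := by
  induction m generalizing j with
  | zero => rw [Nat.zero_mul]; exact subset_smd _
  | succ m ih =>
    push_cast at ha
    have h_union : unionIcc C G (-A - j) (A - j) ⊆ unionIcc C G a b :=
      Set.biUnion_subset_biUnion_left (Set.Icc_subset_Icc (by omega) hb)
    refine (star_mono ((coprodPow_mono h_union k).trans (subset_smd _))
      (ih (by omega) (by omega))).trans (star_smd_subset.trans (smd_subset_smd_iff.2 ?_))
    rw [Nat.succ_mul, Nat.add_comm]
    exact coprodPow_star_coprodPow_subset _ _ _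

end CoprodPow

section StrongApprox

variable {C} {G Rm : ℤ → Set C} {A : ℤ} {T : Set C}

theorem coprodPowBig_subset_compactFac {U : Set C} (hG : IsGenSeq C G)
    (hU : smdCoprod U ⊆ compacts C) (n : ℕ) :
    coprodPowBig C U n ⊆ compactFac (coprodPow C U n) := by
  have hU_add := isAdditiveClass_addClosure U
  induction n with
  | zero => exact subset_compactFac _
  | succ n ih =>
    have h_add : bigAddClosure C U ⊆ compactFac (addClosure C U) := fun X ⟨α, f, hf, ⟨e⟩⟩ =>
      mem_compactFac_of_iso e.symm
        (sigma_mem_compactFac hU_add fun i => subset_compactFac _ (subset_addClosure U (hf i)))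
    exact (star_mono h_add ih).trans (star_compactFac_subset hG hU_add
      (isAdditiveClass_coprodPow U n) ((coprodPow_subset_smdCoprod U n).trans hU))

theorem IsGApproxOn.exists_gInt_subset_gIntPow (h : IsGApproxOn G Rm A T) (hG : IsGenSeq C G)
    {N : ℤ} (hN : 0 < N) : ∃ B : ℤ, 0 < B ∧
      ∀ i : ℤ, gInt C G (-N - i) (N - i) ⊆ gIntPow C G (-B - i) (B - i) B := by
  have hA := h.A_pos
  obtain ⟨m, hm⟩ := Int.eq_ofNat_of_zero_le (show 0 ≤ 2 * N + 2 * A by omega)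
  let P (j : ℤ) : Set C := coprodPow C (unionIcc C G (-A - j) (A - j)) A.toNat
  have h_star (j : ℤ) : Rm j ∩ T ⊆ compactFac (P j) ⋆ (Rm (j + 1) ∩ T) :=
    (h.subset_star_pow j).trans (star_mono ((smd_mono (coprodPowBig_subset_compactFac hG
      (hG.gInt_subset_compacts _ _) _)).trans (smd_compactFac_subset _)) subset_rfl)
  let B : ℤ := N + 2 * A + (m * A.toNat : ℕ)
  have hB : m * A.toNat ≤ B.toNat := (Int.le_toNat (by omega)).2 (by omega)
  refine ⟨B, by omega, fun i Z hZ => ?_⟩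
  have hZR : Z ∈ Rm (i - N - A) := h.MG_subset (i := i - N - A) (j := i - N) (by omega)
    (by simpa only [MG, neg_sub] using gInt_subset_gIic le_rfl hZ)
  have hZ_orth : Z ∈ lOrth C (Rm (i - N - A + m)) :=
    gInt_subset_lOrth (fun n hn => h.hom_vanish n _ (by omega)) hZ
  have hZc := hG.gInt_subset_compacts _ _ hZ
  have hZ_iter : Z ∈ smd C (iterStar P m (i - N - A)) :=
    mem_smd_iterStar hG h.orthMetric.orth (fun _ => isAdditiveClass_coprodPow _ _)
      (fun _ => (coprodPow_subset_smdCoprod _ _).trans (hG.gInt_subset_compacts _ _))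
      (fun _ => Set.inter_subset_left) h_star hZc ⟨hZR, h.compacts_subset hZc⟩ hZ_orth
  have h_pow : iterStar P m (i - N - A) ⊆ gIntPow C G (-B - i) (B - i) B :=
    (iterStar_coprodPow_subset (by omega) (by omega)).trans (smd_mono (coprodPow_mono_right _ hB))
  exact smd_subset_smd_iff.2 h_pow hZ_iter

theorem IsGApproxOn.exists_subset_gIntPow_star (h : IsGApproxOn G Rm A T) (hG : IsGenSeq C G) :
    ∃ B : ℤ, 0 < B ∧
      ∀ i : ℤ, compacts C ∩ Rm i ⊆ gIntPow C G (-B - i) (B - i) B ⋆ Rm (i + 1) := by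
  obtain ⟨N, hN, hN_star⟩ := h.exists_subset_gInt_star hG
  obtain ⟨B, hB, hB_pow⟩ := h.exists_gInt_subset_gIntPow hG hN
  exact ⟨B, hB, fun i => (hN_star i).trans (star_mono (hB_pow i) subset_rfl)⟩

end StrongApprox

theorem statement_16_general (G Rm : ℤ → Set C) (A : ℤ) (hG : IsGenSeq C G)
    (h : IsWeakGQuasiApprox C G Rm A ∨ IsWeakGApprox C G Rm A) :
    (∃ B : ℤ, 0 < B ∧ ∀ i : ℤ, ∀ K ∈ compacts C ∩ Rm i,
      approxTriangle C K (gInt C G (-B - i) (B - i)) (Rm (i + 1))) ∧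
    ((IsGQuasiApprox C G Rm A ∨ IsGApprox C G Rm A) →
      ∃ B : ℤ, 0 < B ∧ ∀ i : ℤ, ∀ K ∈ compacts C ∩ Rm i,
        approxTriangle C K (gIntPow C G (-B - i) (B - i) B) (Rm (i + 1))) := by
  constructor
  · rcases h with h | h
    · exact h.isWeakGApproxOn.exists_subset_gInt_star hG
    · exact h.isWeakGApproxOn.exists_subset_gInt_star hG
  · rintro (h | h)
    · exact h.isGApproxOn.exists_subset_gIntPow_star hG
    · exact h.isGApproxOn.exists_subset_gIntPow_star hG

theorem statement_16 (G Rm : ℤ → Set C) (A : ℤ)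
    (hcg : CompactlyGenerated C) (hG : IsGenSeq C G)
    (h : IsWeakGQuasiApprox C G Rm A ∨ IsWeakGApprox C G Rm A) :
    (∃ B : ℤ, 0 < B ∧ ∀ i : ℤ, ∀ K ∈ compacts C ∩ Rm i,
      approxTriangle C K (gInt C G (-B - i) (B - i)) (Rm (i + 1))) ∧
    ((IsGQuasiApprox C G Rm A ∨ IsGApprox C G Rm A) →
      ∃ B : ℤ, 0 < B ∧ ∀ i : ℤ, ∀ K ∈ compacts C ∩ Rm i,
        approxTriangle C K (gIntPow C G (-B - i) (B - i) B) (Rm (i + 1))) :=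
  statement_16_general C G Rm A hG h

end GApprox
end

section
/- Let (T, R, A) be weakly G-quasiapproximable or weakly G-approximable, and choose an integer B > 0 as in the compact-approximation lemma (i.e. B such that every K ∈ T^c ∩ R_i fits in a triangle E → K → D → ΣE with E ∈ G^{[-B-i,B-i]} and D ∈ R_{i+1}). Then for every integer i and every F ∈ T̄^c ∩ R_i there is a distinguished triangle E → F → D → ΣE with E ∈ G^{[-B-i, B-i]} and D ∈ R_{i+1}. If (T, R, A) is moreover G-quasiapproximable or G-approximable, one may take E ∈ G^{[-B-i, B-i]}_B. -/
namespace GApprox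

open CategoryTheory CategoryTheory.Limits CategoryTheory.Pretriangulated

universe w v u

variable (C : Type u) [Category.{v} C] [HasZeroObject C] [HasShift C ℤ]
  [Preadditive C] [∀ n : ℤ, (shiftFunctor C n).Additive] [Pretriangulated C]
  [HasCoproducts.{v} C]

/-!
Given `F ∈ T̄^c ∩ R_i`, choose a triangle `K ⟶ F ⟶ D₁ ⟶ ΣK` with `K` compact and `D₁ ∈ R_{i+1}`.
Since `Σ⁻¹D₁ ∈ R_i`, also `K ∈ R_i`, so `K` has an approximation `E ⟶ K ⟶ D₂ ⟶ ΣE`, and the claim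
is that the cone of `E ⟶ K ⟶ F` lies in `R_{i+1}`. The ambient category is only pretriangulated,
so no octahedral axiom is available to present this cone as an extension of `D₁` by `D₂`. Instead,
`R_{i+1}` is a left orthogonal, and the cone of `f` has no nonzero maps to `Y` exactly when
`Hom(f, Y)` is injective and `Hom(Σf, Y)` is surjective, two conditions stable under composition.
-/

section Approximation

variable {T : Type u} [Category.{v} T] [HasZeroObject T] [HasShift T ℤ]
  [Preadditive T] [∀ n : ℤ, (shiftFunctor T n).Additive] [Pretriangulated T]

lemma forall_hom_cone_eq_zero_iff {X₁ X₂ X₃ : T} {f : X₁ ⟶ X₂} {g : X₂ ⟶ X₃}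
    {h : X₃ ⟶ X₁⟦(1 : ℤ)⟧} (hT : Triangle.mk f g h ∈ distTriang T) (Y : T) :
    (∀ φ : X₃ ⟶ Y, φ = 0) ↔
      Function.Injective (fun s : X₂ ⟶ Y ↦ f ≫ s) ∧
        Function.Surjective (fun s : X₂⟦(1 : ℤ)⟧ ⟶ Y ↦ f⟦(1 : ℤ)⟧' ≫ s) := by
  constructor
  · intro hY
    refine ⟨fun s t (hst : f ≫ s = f ≫ t) ↦ sub_eq_zero.1 ?_, fun ψ ↦ ?_⟩
    · have hfst : f ≫ (s - t) = 0 := by rw [Preadditive.comp_sub, sub_eq_zero.2 hst]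
      obtain ⟨φ, hφ⟩ : ∃ φ, s - t = g ≫ φ := Triangle.yoneda_exact₂ _ hT (s - t) hfst
      rw [hφ, hY φ, comp_zero]
    · obtain ⟨s, hs⟩ : ∃ s, ψ = (-f⟦(1 : ℤ)⟧') ≫ s :=
        Triangle.yoneda_exact₃ _ (rot_of_distTriang _ hT) ψ (hY (h ≫ ψ))
      exact ⟨-s, by simp [hs]⟩
  · rintro ⟨hinj, hsurj⟩ φ
    have hfg : f ≫ g = 0 := comp_distTriang_mor_zero₁₂ _ hT
    have hhf : h ≫ f⟦(1 : ℤ)⟧' = 0 := comp_distTriang_mor_zero₃₁ _ hT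
    have hφ : g ≫ φ = 0 := hinj <| by
      simp only [← Category.assoc, hfg, zero_comp, comp_zero]
    obtain ⟨ψ, rfl⟩ : ∃ ψ, φ = h ≫ ψ := Triangle.yoneda_exact₃ _ hT φ hφ
    obtain ⟨s, rfl⟩ := hsurj ψ
    simp only [← Category.assoc, hhf, zero_comp]

lemma hom_cone_comp_eq_zero {E K F D D₁ D₂ Y : T} {a : E ⟶ K} {f : K ⟶ F}
    {b : K ⟶ D₂} {c : D₂ ⟶ E⟦(1 : ℤ)⟧} (ha : Triangle.mk a b c ∈ distTriang T)
    {g : F ⟶ D₁} {h : D₁ ⟶ K⟦(1 : ℤ)⟧} (hf : Triangle.mk f g h ∈ distTriang T)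
    {p : F ⟶ D} {q : D ⟶ E⟦(1 : ℤ)⟧} (haf : Triangle.mk (a ≫ f) p q ∈ distTriang T)
    (hD₂ : ∀ φ : D₂ ⟶ Y, φ = 0) (hD₁ : ∀ φ : D₁ ⟶ Y, φ = 0) (φ : D ⟶ Y) : φ = 0 := by
  obtain ⟨a_inj, a_surj⟩ := (forall_hom_cone_eq_zero_iff ha Y).1 hD₂
  obtain ⟨f_inj, f_surj⟩ := (forall_hom_cone_eq_zero_iff hf Y).1 hD₁
  refine (forall_hom_cone_eq_zero_iff haf Y).2 ⟨?_, ?_⟩ φ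
  · simpa [Function.comp_def] using a_inj.comp f_inj
  · simpa [Function.comp_def] using a_surj.comp f_surj

lemma starSet_starSet_lOrth_subset (S 𝒴 : Set T) :
    starSet T (starSet T S (lOrth T 𝒴)) (lOrth T 𝒴) ⊆ starSet T S (lOrth T 𝒴) := by
  rintro F ⟨K, D₁, f, g, h, hf, ⟨E, D₂, a, b, c, ha, hE, hD₂⟩, hD₁⟩
  obtain ⟨D, p, q, haf⟩ := distinguished_cocone_triangle (a ≫ f)
  exact ⟨E, D, a ≫ f, p, q, haf, hE, fun Y hY ↦
    hom_cone_comp_eq_zero ha hf haf (hD₂ Y hY) (hD₁ Y hY)⟩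

lemma IsExtGoodMetric.obj₁_mem {M : ℤ → Set T} (hM : IsExtGoodMetric T M) {i : ℤ}
    {X₁ X₂ X₃ : T} {f : X₁ ⟶ X₂} {g : X₂ ⟶ X₃} {h : X₃ ⟶ X₁⟦(1 : ℤ)⟧}
    (hT : Triangle.mk f g h ∈ distTriang T) (h₂ : X₂ ∈ M i) (h₃ : X₃ ∈ M (i + 1)) : X₁ ∈ M i :=
  hM.star_subset i ⟨_, _, _, _, _, inv_rot_of_distTriang _ hT,
    hM.shift_neg_one i ⟨X₃, h₃, ⟨Iso.refl _⟩⟩, h₂⟩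

theorem statement_17_general {Rm : ℤ → Set T} (hR : IsOrthMetric T Rm) {i : ℤ} {P S : Set T}
    (hP : ∀ K ∈ P ∩ Rm i, approxTriangle T K S (Rm (i + 1))) :
    ∀ F ∈ starSet T P (Rm (i + 1)) ∩ Rm i, approxTriangle T F S (Rm (i + 1)) := by
  rintro F ⟨⟨K, D, f, g, h, hT, hK, hD⟩, hF⟩
  have hKi : K ∈ Rm i := hR.obj₁_mem hT hF hD
  have hKS : K ∈ starSet T S (Rm (i + 1)) := hP K ⟨hK, hKi⟩
  change F ∈ starSet T S (Rm (i + 1))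
  rw [← hR.orth (i + 1)] at hKS hD ⊢
  exact starSet_starSet_lOrth_subset S _ ⟨K, D, f, g, h, hT, hKS, hD⟩

end Approximation

theorem statement_17 (G Rm : ℤ → Set C) (A B : ℤ)
    (hcg : CompactlyGenerated C) (hG : IsGenSeq C G)
    (h : IsWeakGQuasiApprox C G Rm A ∨ IsWeakGApprox C G Rm A) (hB : 0 < B)
    (hBcompact : ∀ i : ℤ, ∀ K ∈ compacts C ∩ Rm i,
      approxTriangle C K (gInt C G (-B - i) (B - i)) (Rm (i + 1))) :
    (∀ i : ℤ, ∀ F ∈ closCompacts C Rm ∩ Rm i,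
      approxTriangle C F (gInt C G (-B - i) (B - i)) (Rm (i + 1))) ∧
    ((IsGQuasiApprox C G Rm A ∨ IsGApprox C G Rm A) →
      (∀ i : ℤ, ∀ K ∈ compacts C ∩ Rm i,
        approxTriangle C K (gIntPow C G (-B - i) (B - i) B) (Rm (i + 1))) →
      ∀ i : ℤ, ∀ F ∈ closCompacts C Rm ∩ Rm i,
        approxTriangle C F (gIntPow C G (-B - i) (B - i) B) (Rm (i + 1))) := by
  have hR : IsOrthMetric C Rm := h.elim (·.orthMetric) (·.orthMetric)
  exact ⟨fun i F hF ↦ statement_17_general hR (hBcompact i) F ⟨Set.mem_iInter.1 hF.1 _, hF.2⟩,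
    fun _ hK i F hF ↦ statement_17_general hR (hK i) F ⟨Set.mem_iInter.1 hF.1 _, hF.2⟩⟩

end GApprox
end
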